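/- Let q, a, b, c be nonzero complex numbers and n ≥ 1 an integer; assume all q-shifted factorials appearing in denominators below are nonzero (in particular (abq²;q)_{k+n−2} ≠ 0 for all relevant k, (abcq;q²)_k ≠ 0, (aq;q)_k ≠ 0, (q;q)_k ≠ 0, and b ≠ 1). Then det((q^{i−1} − c q^{j−1}) · (aq;q)_{i+j−2} / (abq²;q)_{i+j−2})_{1 ≤ i,j ≤ n} = (−1)^n a^{n(n−3)/2} q^{n(n+1)(2n−5)/6} (abcq; q²)_n ∏_{k=1}^{n} [(q;q)_{k−1} (aq;q)_k (bq;q)_{k−2} / (abq²;q)_{k+n−2}] · Σ_{k=0}^{n} (q^{−n};q)_k (abq^{n};q)_k (acq; q²)_k q^k / [(q;q)_k (aq;q)_k (abcq; q²)_k], where (bq;q)_{−1} is interpreted as 1/(1 − b), and the terminating sum is the ₄φ₃ series with numerator parameters q^{−n}, abq^n, ±(acq)^{1/2} and denominator parameters aq, ±(abcq)^{1/2}, rewritten using (u, −u; q)_k = (u²; q²)_k. -/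

import Mathlib

/-!
Let `L` be the little q-Jacobi functional, with moments `(aq;q)_m / (abq²;q)_m`. The matrix is the
Gram matrix, in the monomial basis, of the form `B(P, Q) - c B(Q, P)` where `B(P, Q) = L(P(qX) Q(X))`
(`qForm_sub_eq_sum`). Passing to the monic little q-Jacobi polynomials `p_i` does not change the
determinant. In that basis `B(p_i, p_j) = 0` for `i < j` by orthogonality, while the q-Pearson
equation of the functional (`qL_pearson`) shows that `B(p_i, P)` is proportional to the evaluation
`P(1/(bq))` for `P` of degree less than `i` (`qForm_lqj`). After scaling row and column `i` by
`p_i(1/(bq))` one is left with a matrix whose rows are constant to the left of the diagonal and whose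
columns are constant above it (`det_qMatrix`).

The leading minors of such a matrix, together with their derivatives in the direction of the all-ones
matrix, satisfy a first order recursion in pairs (`det_semisep_add`), equivalently a three-term
recurrence. On the other side the `₄φ₃` sum satisfies the three-term recurrence of the Askey-Wilson
polynomials in its degree (`awSum_partial`, `awVal_recurrence`), proved by telescoping partial sums.
The two recurrences agree up to an explicit normalization (`semisepDet_eq`), and evaluating the product
of the diagonal entries gives the stated prefactor (`prefactor_eq`).

This argument divides by `b`, by all `1 - a b q^k` and by all `1 - b q^k`. The countably many values of
`b` excluded in this way are recovered at the end by density and continuity in `b` (`det_moment`).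
-/

/-- The q-shifted factorial `(a;q)_n = ∏_{k=0}^{n-1} (1 - a q^k)`. -/
noncomputable def qPoch (q a : ℂ) (n : ℕ) : ℂ := ∏ k ∈ Finset.range n, (1 - a * q ^ k)

/-! ### The q-shifted factorial -/

theorem qPoch_zero (q x : ℂ) : qPoch q x 0 = 1 := by simp [qPoch]

theorem qPoch_succ (q x : ℂ) (n : ℕ) :
    qPoch q x (n + 1) = qPoch q x n * (1 - x * q ^ n) := by
  simp [qPoch, Finset.prod_range_succ]

theorem qPoch_succ' (q x : ℂ) (n : ℕ) :
    qPoch q x (n + 1) = (1 - x) * qPoch q (x * q) n := by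
  simp only [qPoch, Finset.prod_range_succ', pow_zero, mul_one]
  rw [mul_comm]
  congr 1
  refine Finset.prod_congr rfl fun k _ => ?_
  ring

theorem qPoch_ne_zero {q x : ℂ} {n : ℕ} (h : ∀ k < n, 1 - x * q ^ k ≠ 0) : qPoch q x n ≠ 0 :=
  Finset.prod_ne_zero_iff.2 fun k hk => h k (Finset.mem_range.1 hk)

/-! ### The little q-Jacobi functional and polynomials -/

/-- The moment of `X ^ m` for the little q-Jacobi functional with parameters `a`, `b`, normalized so
that the moment of `1` is `1`. -/
noncomputable def moment (q a b : ℂ) (m : ℕ) : ℂ :=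
  qPoch q (a * q) m / qPoch q (a * b * q ^ 2) m

/-- The little q-Jacobi functional: the linear functional on polynomials with moments
`moment q a b`. It is defined purely algebraically, so `|q| < 1` is not needed. -/
noncomputable def qL (q a b : ℂ) : Polynomial ℂ →ₗ[ℂ] ℂ :=
  Polynomial.lsum fun m => moment q a b m • LinearMap.id

/-- The coefficient in the recursion `lqj` that raises the degree while shifting `a` to `a * q`.
The parameters are ordered `q b a` to match `lqj`. -/
noncomputable def lam (q b a : ℂ) (i : ℕ) : ℂ :=
  q ^ i * (1 - a * q ^ (i + 1)) * (1 - a * b * q ^ (i + 1)) /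
    ((1 - a * b * q ^ (2 * i + 1)) * (1 - a * b * q ^ (2 * i + 2)))

/-- The monic little q-Jacobi polynomials, defined by the contiguous relation
`p_{i+1}(X; a) = X p_i(X; aq) - λ_i(a) p_i(X; a)`. The parameter `a` varies in the recursion, so it
comes after the index. -/
noncomputable def lqj (q b : ℂ) : ℕ → ℂ → Polynomial ℂ
  | 0, _ => 1
  | i + 1, a => Polynomial.X * lqj q b i (a * q) - Polynomial.C (lam q b a i) * lqj q b i a

/-- The closed form of `L(p_i X ^ m)` for the little q-Jacobi functional `L` and polynomial `p_i`
(see `qL_lqj_mul_X_pow`). The product over `r < i` vanishes for `m < i`, which is orthogonality. -/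
noncomputable def mixedMoment (q a b : ℂ) (i m : ℕ) : ℂ :=
  qPoch q (a * q) m * qPoch q (a * b * q) i * qPoch q (b * q) i * (a * q) ^ i *
    (∏ r ∈ Finset.range i, q ^ r * (q ^ r - q ^ m)) /
    (qPoch q (a * b * q ^ 2) (m + i) * qPoch q (a * b * q) (2 * i))

/-- The closed form of the value of the little q-Jacobi polynomial of degree `i` at `1 / (b * q)`
(see `eval_lqj`). -/
noncomputable def lqjVal (q a b : ℂ) (i : ℕ) : ℂ :=
  qPoch q (b * q) i * qPoch q (a * b * q) i / ((b * q) ^ i * qPoch q (a * b * q) (2 * i))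

theorem qL_C_mul_X_pow (q a b r : ℂ) (m : ℕ) :
    qL q a b (Polynomial.C r * Polynomial.X ^ m) = r * moment q a b m := by
  rw [Polynomial.C_mul_X_pow_eq_monomial]
  simp [qL, Polynomial.lsum_apply, Polynomial.sum_monomial_index, mul_comm]

theorem qL_X_pow (q a b : ℂ) (m : ℕ) :
    qL q a b (Polynomial.X ^ m) = moment q a b m := by
  simpa using qL_C_mul_X_pow q a b 1 m

theorem moment_succ {q a b : ℂ} (hab : ∀ k : ℕ, 1 - a * b * q ^ k ≠ 0) (m : ℕ) :
    (1 - a * b * q ^ (m + 2)) * moment q a b (m + 1) = (1 - a * q ^ (m + 1)) * moment q a b m := by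
  have h1 : qPoch q (a * b * q ^ 2) m ≠ 0 := qPoch_ne_zero fun k _ => by
    have := hab (k + 2); rwa [show a * b * q ^ 2 * q ^ k = a * b * q ^ (k + 2) by ring]
  have h2 := hab (m + 2)
  rw [moment, moment, qPoch_succ, qPoch_succ,
    show a * b * q ^ 2 * q ^ m = a * b * q ^ (m + 2) by ring,
    show a * q * q ^ m = a * q ^ (m + 1) by ring]
  field_simp

theorem moment_shift (q a b : ℂ) (m : ℕ) :
    moment q a b (m + 1) = (1 - a * q) / (1 - a * b * q ^ 2) * moment q (a * q) b m := by
  rw [moment, moment, qPoch_succ', qPoch_succ',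
    show a * b * q ^ 2 * q = a * q * b * q ^ 2 by ring, mul_div_mul_comm]

/-- Multiplication by `X` turns the functional into a multiple of the one with `a` replaced by
`a * q`; this matches the parameter shift in the recursion for `lqj`. -/
theorem qL_X_mul (q a b : ℂ) (P : Polynomial ℂ) :
    qL q a b (Polynomial.X * P) = (1 - a * q) / (1 - a * b * q ^ 2) * qL q (a * q) b P := by
  induction P using Polynomial.induction_on' with
  | add P Q hP hQ => rw [mul_add, map_add, hP, hQ, map_add, mul_add]
  | monomial n r =>
    rw [← Polynomial.C_mul_X_pow_eq_monomial, qL_C_mul_X_pow,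
      show Polynomial.X * (Polynomial.C r * Polynomial.X ^ n)
        = Polynomial.C r * Polynomial.X ^ (n + 1) by ring, qL_C_mul_X_pow, moment_shift]
    ring

/-- The q-Pearson equation of the little q-Jacobi weight, in functional form. -/
theorem qL_pearson {q a b : ℂ} (hab : ∀ k : ℕ, 1 - a * b * q ^ k ≠ 0) (P : Polynomial ℂ) :
    qL q a b ((1 - Polynomial.X) * P) =
      a * q * qL q a b ((1 - Polynomial.C (b * q) * Polynomial.X) *
        P.comp (Polynomial.C q * Polynomial.X)) := by
  induction P using Polynomial.induction_on' with
  | add P Q hP hQ => rw [mul_add, map_add, hP, hQ, Polynomial.add_comp, mul_add, map_add, mul_add]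
  | monomial n r =>
    rw [← Polynomial.C_mul_X_pow_eq_monomial,
      show (1 - Polynomial.X) * (Polynomial.C r * Polynomial.X ^ n)
        = Polynomial.C r * Polynomial.X ^ n - Polynomial.C r * Polynomial.X ^ (n + 1) by ring,
      show (1 - Polynomial.C (b * q) * Polynomial.X) * (Polynomial.C r * Polynomial.X ^ n : Polynomial ℂ).comp
          (Polynomial.C q * Polynomial.X)
        = Polynomial.C (r * q ^ n) * Polynomial.X ^ n
          - Polynomial.C (b * q * r * q ^ n) * Polynomial.X ^ (n + 1) by
        simp only [Polynomial.mul_comp, Polynomial.C_comp, Polynomial.X_pow_comp, mul_pow,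
          Polynomial.C_mul, Polynomial.C_pow]
        ring]
    simp only [map_sub, qL_C_mul_X_pow]
    linear_combination (-r) * moment_succ hab n

theorem mixedMoment_succ (q a b : ℂ) (i m : ℕ) :
    mixedMoment q a b (i + 1) m = mixedMoment q a b i m *
      ((1 - a * b * q ^ (i + 1)) * (1 - b * q ^ (i + 1)) * (a * q) * (q ^ i * (q ^ i - q ^ m)) /
      ((1 - a * b * q ^ (m + i + 2)) *
        ((1 - a * b * q ^ (2 * i + 1)) * (1 - a * b * q ^ (2 * i + 2))))) := by
  rw [mixedMoment, mixedMoment, Finset.prod_range_succ, ← add_assoc, mul_add_one,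
    show 2 * i + 2 = 2 * i + 1 + 1 by rfl]
  simp only [qPoch_succ]
  rw [show a * b * q ^ 2 * q ^ (m + i) = a * b * q ^ (m + i + 2) by ring,
    show a * b * q * q ^ (2 * i) = a * b * q ^ (2 * i + 1) by ring,
    show a * b * q * q ^ (2 * i + 1) = a * b * q ^ (2 * i + 1 + 1) by ring,
    show a * b * q * q ^ i = a * b * q ^ (i + 1) by ring,
    show b * q * q ^ i = b * q ^ (i + 1) by ring, ← mul_div_mul_comm]
  congr 1 <;> ring

theorem mixedMoment_shift {q a b : ℂ} (hab : ∀ k : ℕ, 1 - a * b * q ^ k ≠ 0) (i m : ℕ) :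
    (1 - a * q) / (1 - a * b * q ^ 2) * mixedMoment q (a * q) b i m = mixedMoment q a b i m *
      ((1 - a * q ^ (m + 1)) * q ^ i * (1 - a * b * q ^ (i + 1)) /
        ((1 - a * b * q ^ (m + i + 2)) * (1 - a * b * q ^ (2 * i + 1)))) := by
  have h0 : ∀ s k : ℕ, qPoch q (a * b * q ^ s) k ≠ 0 := fun s k => qPoch_ne_zero fun j _ => by
    have := hab (s + j); rwa [mul_assoc _ _ (q ^ j), ← pow_add]
  have e1 := (qPoch_succ q (a * q) m).symm.trans (qPoch_succ' q (a * q) m)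
  have e2 := (qPoch_succ q (a * b * q) i).symm.trans (qPoch_succ' q (a * b * q) i)
  have e3 := (qPoch_succ q (a * b * q ^ 2) (m + i)).symm.trans (qPoch_succ' q (a * b * q ^ 2) (m + i))
  have e4 := (qPoch_succ q (a * b * q) (2 * i)).symm.trans (qPoch_succ' q (a * b * q) (2 * i))
  have n1 := h0 2 (m + i)
  have n2 := h0 1 (2 * i)
  have n3 := h0 3 (m + i)
  have n4 := h0 2 (2 * i)
  have k1 := hab 1
  have k2 := hab 2
  have k3 := hab (m + i + 2)
  have k4 := hab (2 * i + 1)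
  rw [mixedMoment, mixedMoment]
  rw [show a * q * b * q = a * b * q * q by ring, show a * q * b * q ^ 2 = a * b * q ^ 2 * q by ring]
  rw [show a * q * q ^ m = a * q ^ (m + 1) by ring] at e1
  rw [show a * b * q * q ^ i = a * b * q ^ (i + 1) by ring] at e2
  rw [show a * b * q ^ 2 * q ^ (m + i) = a * b * q ^ (m + i + 2) by ring] at e3
  rw [show a * b * q * q ^ (2 * i) = a * b * q ^ (2 * i + 1) by ring] at e4
  rw [show a * b * q ^ 3 = a * b * q ^ 2 * q by ring] at n3
  rw [show a * b * q ^ 2 = a * b * q * q by ring] at n4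
  rw [pow_one] at n2 k1
  have f2 : qPoch q (a * b * q * q) i
      = qPoch q (a * b * q) i * (1 - a * b * q ^ (i + 1)) / (1 - a * b * q) := by
    rw [e2]; field_simp
  have f3 : qPoch q (a * b * q ^ 2 * q) (m + i)
      = qPoch q (a * b * q ^ 2) (m + i) * (1 - a * b * q ^ (m + i + 2)) / (1 - a * b * q ^ 2) := by
    rw [e3]; field_simp
  have f4 : qPoch q (a * b * q * q) (2 * i)
      = qPoch q (a * b * q) (2 * i) * (1 - a * b * q ^ (2 * i + 1)) / (1 - a * b * q) := by
    rw [e4]; field_simp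
  rw [div_mul_div_comm]
  simp only [← mul_assoc (1 - a * q)]
  rw [← e1, f2, f3, f4, mul_pow (a * q) q i]
  clear f2 f3 f4 e1 e2 e3 e4 n3 n4
  generalize 1 - a * b * q = D1 at *
  generalize 1 - a * b * q ^ 2 = D2 at *
  generalize 1 - a * b * q ^ (m + i + 2) = D3 at *
  generalize 1 - a * b * q ^ (2 * i + 1) = D4 at *
  generalize qPoch q (a * b * q ^ 2) (m + i) = D5 at *
  generalize qPoch q (a * b * q) (2 * i) = D6 at *
  field_simp

theorem qL_lqj_mul_X_pow {q b : ℂ} (i : ℕ) : ∀ (a : ℂ), (∀ k : ℕ, 1 - a * b * q ^ k ≠ 0) →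
    ∀ m : ℕ, qL q a b (lqj q b i a * Polynomial.X ^ m) = mixedMoment q a b i m := by
  induction i with
  | zero =>
    intro a hab m
    simp [lqj, qL_X_pow, mixedMoment, moment, qPoch_zero]
  | succ i ih =>
    intro a hab m
    have hab' : ∀ k : ℕ, 1 - a * q * b * q ^ k ≠ 0 := fun k => by
      have := hab (k + 1); rwa [show a * q * b * q ^ k = a * b * q ^ (k + 1) by ring]
    have k1 := hab (m + i + 2)
    have k2 := hab (2 * i + 1)
    have k3 := hab (2 * i + 2)
    rw [lqj, sub_mul, map_sub, mul_assoc, qL_X_mul, ih _ hab', mixedMoment_shift hab,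
      Polynomial.C_mul', smul_mul_assoc, map_smul, ih _ hab, mixedMoment_succ, smul_eq_mul, lam]
    field_simp
    ring

theorem lqj_monic (q b : ℂ) (i : ℕ) : ∀ a, (lqj q b i a).Monic ∧ (lqj q b i a).natDegree = i := by
  induction i with
  | zero => intro a; simp [lqj]
  | succ i ih =>
    intro a
    obtain ⟨h1, h2⟩ := ih (a * q)
    obtain ⟨h3, h4⟩ := ih a
    have h5 : (Polynomial.X * lqj q b i (a * q)).Monic := Polynomial.monic_X.mul h1
    have h6 : (Polynomial.X * lqj q b i (a * q)).natDegree = i + 1 := by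
      rw [Polynomial.monic_X.natDegree_mul h1, h2, Polynomial.natDegree_X, add_comm]
    have h7 : (Polynomial.C (lam q b a i) * lqj q b i a).degree
        < (Polynomial.X * lqj q b i (a * q)).degree := by
      refine (Polynomial.degree_le_natDegree).trans_lt ?_
      rw [Polynomial.degree_eq_natDegree h5.ne_zero, h6]
      have := Polynomial.natDegree_C_mul_le (lam q b a i) (lqj q b i a)
      exact_mod_cast Nat.lt_succ_of_le (this.trans h4.le)
    rw [lqj]
    refine ⟨h5.sub_of_left h7, ?_⟩
    rw [Polynomial.natDegree_sub_eq_left_of_natDegree_lt, h6]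
    rw [h6]
    exact Nat.lt_succ_of_le ((Polynomial.natDegree_C_mul_le _ _).trans h4.le)

theorem lqjVal_succ (q a b : ℂ) (i : ℕ) :
    lqjVal q a b (i + 1) = lqjVal q a b i *
      ((1 - b * q ^ (i + 1)) * (1 - a * b * q ^ (i + 1)) /
        (b * q * ((1 - a * b * q ^ (2 * i + 1)) * (1 - a * b * q ^ (2 * i + 2))))) := by
  rw [lqjVal, lqjVal, mul_add_one, show 2 * i + 2 = 2 * i + 1 + 1 by rfl]
  simp only [qPoch_succ]
  rw [show a * b * q * q ^ (2 * i) = a * b * q ^ (2 * i + 1) by ring,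
    show a * b * q * q ^ (2 * i + 1) = a * b * q ^ (2 * i + 1 + 1) by ring,
    show a * b * q * q ^ i = a * b * q ^ (i + 1) by ring,
    show b * q * q ^ i = b * q ^ (i + 1) by ring, ← mul_div_mul_comm]
  congr 1 <;> ring

theorem lqjVal_shift {q a b : ℂ} (hab : ∀ k : ℕ, 1 - a * b * q ^ k ≠ 0) (i : ℕ) :
    lqjVal q (a * q) b i = lqjVal q a b i *
      ((1 - a * b * q ^ (i + 1)) / (1 - a * b * q ^ (2 * i + 1))) := by
  have h0 : ∀ s k : ℕ, qPoch q (a * b * q ^ s) k ≠ 0 := fun s k => qPoch_ne_zero fun j _ => by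
    have := hab (s + j); rwa [mul_assoc _ _ (q ^ j), ← pow_add]
  have e2 := (qPoch_succ q (a * b * q) i).symm.trans (qPoch_succ' q (a * b * q) i)
  have e4 := (qPoch_succ q (a * b * q) (2 * i)).symm.trans (qPoch_succ' q (a * b * q) (2 * i))
  have n2 := h0 1 (2 * i)
  have k1 := hab 1
  have k4 := hab (2 * i + 1)
  rw [lqjVal, lqjVal, show a * q * b * q = a * b * q * q by ring]
  rw [show a * b * q * q ^ i = a * b * q ^ (i + 1) by ring] at e2
  rw [show a * b * q * q ^ (2 * i) = a * b * q ^ (2 * i + 1) by ring] at e4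
  rw [pow_one] at n2 k1
  have f2 : qPoch q (a * b * q * q) i
      = qPoch q (a * b * q) i * (1 - a * b * q ^ (i + 1)) / (1 - a * b * q) := by
    rw [e2]; field_simp
  have f4 : qPoch q (a * b * q * q) (2 * i)
      = qPoch q (a * b * q) (2 * i) * (1 - a * b * q ^ (2 * i + 1)) / (1 - a * b * q) := by
    rw [e4]; field_simp
  rw [f2, f4]
  clear f2 f4 e2 e4
  generalize 1 - a * b * q = D1 at *
  generalize 1 - a * b * q ^ (2 * i + 1) = D4 at *
  generalize qPoch q (a * b * q) (2 * i) = D6 at *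
  field_simp

theorem eval_lqj {q b : ℂ} (hq : q ≠ 0) (hb : b ≠ 0) (i : ℕ) :
    ∀ (a : ℂ), (∀ k : ℕ, 1 - a * b * q ^ k ≠ 0) →
      (lqj q b i a).eval (1 / (b * q)) = lqjVal q a b i := by
  induction i with
  | zero => intro a hab; simp [lqj, lqjVal, qPoch_zero]
  | succ i ih =>
    intro a hab
    have hab' : ∀ k : ℕ, 1 - a * q * b * q ^ k ≠ 0 := fun k => by
      have := hab (k + 1); rwa [show a * q * b * q ^ k = a * b * q ^ (k + 1) by ring]
    have k2 := hab (2 * i + 1)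
    have k3 := hab (2 * i + 2)
    rw [lqj, Polynomial.eval_sub, Polynomial.eval_mul, Polynomial.eval_mul, Polynomial.eval_X,
      Polynomial.eval_C, ih _ hab, ih _ hab', lqjVal_shift hab, lqjVal_succ, lam]
    obtain ⟨D2, hD2⟩ : ∃ D, D = 1 - a * b * q ^ (2 * i + 1) := ⟨_, rfl⟩
    obtain ⟨D3, hD3⟩ : ∃ D, D = 1 - a * b * q ^ (2 * i + 2) := ⟨_, rfl⟩
    rw [← hD2] at k2 ⊢
    rw [← hD3] at k3 ⊢
    field_simp
    rw [hD3]
    ring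

theorem mixedMoment_eq_zero (q a b : ℂ) {i m : ℕ} (h : m < i) : mixedMoment q a b i m = 0 := by
  rw [mixedMoment, Finset.prod_eq_zero (Finset.mem_range.2 h) (by simp)]
  simp

/-- Orthogonality: pairing `p_i` with a polynomial of degree at most `i` only sees the coefficient
of `X ^ i`. -/
theorem qL_lqj_mul {q a b : ℂ} (hab : ∀ k : ℕ, 1 - a * b * q ^ k ≠ 0) (i : ℕ)
    {P : Polynomial ℂ} (hP : P.natDegree ≤ i) :
    qL q a b (lqj q b i a * P) = P.coeff i * mixedMoment q a b i i := by
  conv_lhs => rw [P.as_sum_range_C_mul_X_pow' (Nat.lt_succ_of_le hP)]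
  rw [Finset.mul_sum, map_sum, Finset.sum_range_succ, Finset.sum_eq_zero, zero_add]
  · rw [mul_left_comm, Polynomial.C_mul', map_smul, qL_lqj_mul_X_pow i a hab, smul_eq_mul]
  · intro k hk
    rw [mul_left_comm, Polynomial.C_mul', map_smul, qL_lqj_mul_X_pow i a hab,
      mixedMoment_eq_zero _ _ _ (Finset.mem_range.1 hk), smul_zero]

/-! ### The dilated bilinear form -/

/-- The bilinear form `(P, Q) ↦ L(P(qX) Q(X))`. Its matrix in the monomial basis is
`q ^ i * moment (i + j)`. -/
noncomputable def qForm (q a b : ℂ) (P Q : Polynomial ℂ) : ℂ :=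
  qL q a b (P.comp (Polynomial.C q * Polynomial.X) * Q)

/-- The q-Pearson equation applied to `p_i X ^ j`. By orthogonality the correction term vanishes
for `j + 1 < i`, so then multiplying the second argument by `X` amounts to multiplying the form by
`1 / (b * q)`. -/
theorem qForm_lqj_X_pow_succ {q a b : ℂ} (hq : q ≠ 0) (ha : a ≠ 0) (hb : b ≠ 0)
    (hab : ∀ k : ℕ, 1 - a * b * q ^ k ≠ 0) (i j : ℕ) :
    qForm q a b (lqj q b i a) (Polynomial.X ^ (j + 1)) =
      1 / (b * q) * qForm q a b (lqj q b i a) (Polynomial.X ^ j) -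
        1 / (a * b * q ^ (j + 2)) * (mixedMoment q a b i j - mixedMoment q a b i (j + 1)) := by
  have h := qL_pearson hab (Polynomial.C ((q ^ j)⁻¹) * (lqj q b i a * Polynomial.X ^ j))
  rw [show (1 - Polynomial.X) * (Polynomial.C ((q ^ j)⁻¹) * (lqj q b i a * Polynomial.X ^ j))
      = Polynomial.C ((q ^ j)⁻¹) * (lqj q b i a * Polynomial.X ^ j)
        - Polynomial.C ((q ^ j)⁻¹) * (lqj q b i a * Polynomial.X ^ (j + 1)) by ring,
    Polynomial.mul_comp, Polynomial.mul_comp, Polynomial.C_comp, Polynomial.X_pow_comp, mul_pow,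
    show (1 - Polynomial.C (b * q) * Polynomial.X) * (Polynomial.C ((q ^ j)⁻¹) *
        ((lqj q b i a).comp (Polynomial.C q * Polynomial.X) *
          (Polynomial.C q ^ j * Polynomial.X ^ j)))
      = (Polynomial.C ((q ^ j)⁻¹) * Polynomial.C q ^ j) *
          ((lqj q b i a).comp (Polynomial.C q * Polynomial.X) * Polynomial.X ^ j
          - Polynomial.C (b * q) * ((lqj q b i a).comp (Polynomial.C q * Polynomial.X) *
            Polynomial.X ^ (j + 1))) by ring,
    ← Polynomial.C_pow, ← Polynomial.C_mul, inv_mul_cancel₀ (pow_ne_zero _ hq), Polynomial.C_1,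
    one_mul] at h
  simp only [Polynomial.C_mul', map_sub, map_smul, smul_eq_mul] at h
  rw [qL_lqj_mul_X_pow i a hab, qL_lqj_mul_X_pow i a hab] at h
  simp only [qForm]
  simp only [Polynomial.C_mul'] at h ⊢
  generalize qL q a b ((lqj q b i a).comp (q • Polynomial.X) * Polynomial.X ^ j) = A at *
  generalize qL q a b ((lqj q b i a).comp (q • Polynomial.X) * Polynomial.X ^ (j + 1)) = B at *
  field_simp at h ⊢
  linear_combination q * h

theorem qForm_lqj_X_pow {q a b : ℂ} (hq : q ≠ 0) (ha : a ≠ 0) (hb : b ≠ 0)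
    (hab : ∀ k : ℕ, 1 - a * b * q ^ k ≠ 0) (i j : ℕ) (hj : j ≤ i) :
    qForm q a b (lqj q b (i + 1) a) (Polynomial.X ^ j) =
      (1 / (b * q)) ^ j * qForm q a b (lqj q b (i + 1) a) 1 := by
  induction j with
  | zero => simp
  | succ j ih =>
    rw [qForm_lqj_X_pow_succ hq ha hb hab, ih (by omega), mixedMoment_eq_zero _ _ _ (by omega),
      mixedMoment_eq_zero _ _ _ (by omega)]
    ring

/-- For `P` of degree at most `i + 1`, the form `P ↦ L(p_{i+1}(qX) P)` is, up to a leading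
coefficient term, a multiple of the evaluation at `1 / (b * q)`. -/
theorem qForm_lqj {q a b : ℂ} (hq : q ≠ 0) (ha : a ≠ 0) (hb : b ≠ 0)
    (hab : ∀ k : ℕ, 1 - a * b * q ^ k ≠ 0) (i : ℕ) {P : Polynomial ℂ} (hP : P.natDegree ≤ i + 1) :
    qForm q a b (lqj q b (i + 1) a) P =
      P.eval (1 / (b * q)) * qForm q a b (lqj q b (i + 1) a) 1 +
        P.coeff (i + 1) * (mixedMoment q a b (i + 1) (i + 1) / (a * b * q ^ (i + 2))) := by
  have hs : ∀ (r : ℂ) (Q : Polynomial ℂ), qForm q a b (lqj q b (i + 1) a) (Polynomial.C r * Q)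
      = r * qForm q a b (lqj q b (i + 1) a) Q := fun r Q => by
    rw [qForm, mul_left_comm, Polynomial.C_mul', map_smul, qForm, smul_eq_mul]
  have h1 : qForm q a b (lqj q b (i + 1) a) P = ∑ k ∈ Finset.range (i + 2),
      P.coeff k * qForm q a b (lqj q b (i + 1) a) (Polynomial.X ^ k) := by
    conv_lhs => rw [P.as_sum_range_C_mul_X_pow' (Nat.lt_succ_of_le hP)]
    rw [qForm, Finset.mul_sum, map_sum]
    exact Finset.sum_congr rfl fun k _ => hs _ _
  have h2 : P.eval (1 / (b * q)) = ∑ k ∈ Finset.range (i + 2), P.coeff k * (1 / (b * q)) ^ k :=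
    Polynomial.eval_eq_sum_range' (Nat.lt_succ_of_le hP) _
  rw [h1, h2, Finset.sum_range_succ, Finset.sum_range_succ _ (i + 1), add_mul, Finset.sum_mul,
    qForm_lqj_X_pow_succ hq ha hb hab, qForm_lqj_X_pow hq ha hb hab i i le_rfl,
    mixedMoment_eq_zero _ _ _ (Nat.lt_succ_self i)]
  rw [Finset.sum_congr rfl fun k hk => by
    rw [qForm_lqj_X_pow hq ha hb hab i k (by have := Finset.mem_range.1 hk; omega)]]
  simp only [mul_assoc]
  ring

theorem qForm_lqj_self {q a b : ℂ} (hab : ∀ k : ℕ, 1 - a * b * q ^ k ≠ 0) (i : ℕ) :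
    qForm q a b (lqj q b i a) (lqj q b i a) = q ^ i * mixedMoment q a b i i := by
  obtain ⟨h1, h2⟩ := lqj_monic q b i a
  rw [qForm, mul_comm, qL_lqj_mul hab]
  · have h3 := h1.coeff_natDegree
    rw [h2] at h3
    rw [Polynomial.comp_C_mul_X_coeff, h3, one_mul]
  · refine Polynomial.natDegree_comp_le.trans ?_
    rw [h2]
    exact (Nat.mul_le_mul_left i (by compute_degree)).trans_eq (mul_one i)

theorem qForm_lqj_one {q a b : ℂ} (hq : q ≠ 0) (ha : a ≠ 0) (hb : b ≠ 0)
    (hab : ∀ k : ℕ, 1 - a * b * q ^ k ≠ 0) (i : ℕ) :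
    lqjVal q a b (i + 1) * qForm q a b (lqj q b (i + 1) a) 1 =
      q ^ (i + 1) * mixedMoment q a b (i + 1) (i + 1) *
        (1 - 1 / (a * b * q ^ (2 * (i + 1) + 1))) := by
  have h := qForm_lqj hq ha hb hab i (lqj_monic q b (i + 1) a).2.le
  have h3 := (lqj_monic q b (i + 1) a).1.coeff_natDegree
  rw [(lqj_monic q b (i + 1) a).2] at h3
  rw [qForm_lqj_self hab, eval_lqj hq hb _ _ hab, h3] at h
  generalize mixedMoment q a b (i + 1) (i + 1) = A at *
  rw [show lqjVal q a b (i + 1) * qForm q a b (lqj q b (i + 1) a) 1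
    = q ^ (i + 1) * A - 1 * (A / (a * b * q ^ (i + 2))) by rw [h]; ring]
  field_simp
  ring

/-- Below the diagonal the matrix of `qForm` in the little q-Jacobi basis has rank one structure:
the entry is a function of `i` times a function of `j`. -/
theorem qForm_lqj_of_lt {q a b : ℂ} (hq : q ≠ 0) (ha : a ≠ 0) (hb : b ≠ 0)
    (hab : ∀ k : ℕ, 1 - a * b * q ^ k ≠ 0) {i j : ℕ} (hij : j < i) :
    qForm q a b (lqj q b i a) (lqj q b j a) =
      lqjVal q a b j * qForm q a b (lqj q b i a) 1 := by
  obtain ⟨i, rfl⟩ : ∃ k, i = k + 1 := ⟨i - 1, by omega⟩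
  have h2 := (lqj_monic q b j a).2
  rw [qForm_lqj hq ha hb hab i (by omega), eval_lqj hq hb _ _ hab,
    Polynomial.coeff_eq_zero_of_natDegree_lt (by omega), zero_mul, add_zero]

/-! ### Reduction to a semiseparable matrix -/

/-- The matrix whose determinant is sought, with indices starting at `0`. -/
noncomputable def qMatrix (q a b c : ℂ) (n : ℕ) : Matrix (Fin n) (Fin n) ℂ :=
  Matrix.of fun i j => (q ^ (i : ℕ) - c * q ^ (j : ℕ)) * moment q a b ((i : ℕ) + (j : ℕ))

/-- `qMatrix` is the Gram matrix, in the monomial basis, of the form `(P, Q) ↦ B(P, Q) - c B(Q, P)`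
with `B = qForm`. -/
theorem qForm_sub_eq_sum (q a b c : ℂ) {n : ℕ} {P Q : Polynomial ℂ} (hP : P.natDegree < n)
    (hQ : Q.natDegree < n) :
    qForm q a b P Q - c * qForm q a b Q P =
      ∑ i : Fin n, ∑ j : Fin n, P.coeff i * qMatrix q a b c n i j * Q.coeff j := by
  have key : ∀ {P Q : Polynomial ℂ}, P.natDegree < n → Q.natDegree < n → qForm q a b P Q =
      ∑ i ∈ Finset.range n, ∑ j ∈ Finset.range n,
        P.coeff i * Q.coeff j * (q ^ i * moment q a b (i + j)) := by
    intro P Q hP hQ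
    rw [qForm]
    conv_lhs => rw [P.as_sum_range_C_mul_X_pow' hP, Q.as_sum_range_C_mul_X_pow' hQ]
    rw [Polynomial.sum_comp, Finset.sum_mul_sum, map_sum]
    refine Finset.sum_congr rfl fun i _ => ?_
    rw [map_sum]
    refine Finset.sum_congr rfl fun j _ => ?_
    rw [Polynomial.mul_comp, Polynomial.C_comp, Polynomial.X_pow_comp, mul_pow,
      show Polynomial.C (P.coeff i) * (Polynomial.C q ^ i * Polynomial.X ^ i) *
        (Polynomial.C (Q.coeff j) * Polynomial.X ^ j) =
        Polynomial.C (P.coeff i * Q.coeff j * q ^ i) * Polynomial.X ^ (i + j) by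
          simp only [Polynomial.C_mul, Polynomial.C_pow]; ring, qL_C_mul_X_pow]
    ring
  rw [key hP hQ, key hQ hP, Finset.sum_comm, Finset.mul_sum, ← Finset.sum_sub_distrib,
    Finset.sum_comm' (t' := Finset.univ) (s' := fun _ => Finset.univ) (by simp),
    ← Fin.sum_univ_eq_sum_range (fun y => (∑ x ∈ Finset.range n, P.coeff x * Q.coeff y *
      (q ^ x * moment q a b (x + y))) - c * ∑ j ∈ Finset.range n, Q.coeff y * P.coeff j *
        (q ^ y * moment q a b (y + j)))]
  refine Finset.sum_congr rfl fun j _ => ?_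
  rw [Finset.mul_sum, ← Finset.sum_sub_distrib, ← Fin.sum_univ_eq_sum_range (fun x =>
    P.coeff x * Q.coeff j * (q ^ x * moment q a b (x + j)) -
      c * (Q.coeff j * P.coeff x * (q ^ (j : ℕ) * moment q a b (j + x))))]
  refine Finset.sum_congr rfl fun i _ => ?_
  rw [qMatrix, Matrix.of_apply, add_comm (j : ℕ)]
  ring

/-- The base change from monomials to the monic little q-Jacobi polynomials is unitriangular, hence
preserves the determinant. -/
theorem det_qMatrix_eq (q a b c : ℂ) (n : ℕ) :
    (qMatrix q a b c n).det = (Matrix.of fun i j : Fin n =>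
      qForm q a b (lqj q b i a) (lqj q b j a) -
        c * qForm q a b (lqj q b j a) (lqj q b i a)).det := by
  have hd := Matrix.det_matrixOfPolynomials (fun i : Fin n => lqj q b i a)
    (fun i => (lqj_monic q b i a).2) (fun i => (lqj_monic q b i a).1)
  set N : Matrix (Fin n) (Fin n) ℂ := Matrix.of fun i j => (lqj q b j a).coeff i with hN
  have : (Matrix.of fun i j : Fin n => qForm q a b (lqj q b i a) (lqj q b j a) -
      c * qForm q a b (lqj q b j a) (lqj q b i a)) = N.transpose * qMatrix q a b c n * N := by
    ext i j
    rw [Matrix.of_apply, qForm_sub_eq_sum q a b c (n := n)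
      ((lqj_monic q b i a).2.trans_lt i.2) ((lqj_monic q b j a).2.trans_lt j.2),
      Matrix.mul_apply, Finset.sum_comm]
    refine Finset.sum_congr rfl fun l _ => ?_
    rw [Matrix.mul_apply, Finset.sum_mul]
    rfl
  rw [this, Matrix.det_mul, Matrix.det_mul, Matrix.det_transpose, hd, one_mul, mul_one]

/-- The `(i, j)` entry of the matrix that has `d i` on the diagonal, whose row `i` is constantly
`l i` to the left of the diagonal, and whose column `j` is constantly `u j` above it. -/
def semisep (d l u : ℕ → ℂ) (i j : ℕ) : ℂ :=
  if j < i then l i else if i = j then d i else u j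

/-- The coefficients `(f, g)` of the determinant `f + t * g` of the leading `n × n` block of
`semisep d l u` with `t` added to every entry, computed by recursion on `n`
(see `det_semisep_add`). -/
def semisepDet (d l u : ℕ → ℂ) : ℕ → ℂ × ℂ
  | 0 => (1, 0)
  | n + 1 => (d n * (semisepDet d l u n).1 - l n * u n * (semisepDet d l u n).2,
      (semisepDet d l u n).1 + (d n - l n - u n) * (semisepDet d l u n).2)

/-- If `det (V + t J) = f + t g` for the all-ones matrix `J`, then bordering `V` by a constant
column `x`, a constant row `y` and a corner `z` gives the determinant `z f - x y g`: a Schur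
complement for `z ≠ 0`, extended to `z = 0` by continuity. -/
theorem det_bordered {n : ℕ} (V : Matrix (Fin n) (Fin n) ℂ) (f g : ℂ)
    (hV : ∀ t : ℂ, (V + Matrix.of fun _ _ => t).det = f + t * g) (x y z : ℂ) :
    (Matrix.fromBlocks V (Matrix.of fun (_ : Fin n) (_ : Fin 1) => x)
      (Matrix.of fun (_ : Fin 1) (_ : Fin n) => y) (Matrix.of fun (_ _ : Fin 1) => z)).det =
      z * f - x * y * g := by
  have hc : Continuous fun z : ℂ => (Matrix.fromBlocks V
      (Matrix.of fun (_ : Fin n) (_ : Fin 1) => x)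
      (Matrix.of fun (_ : Fin 1) (_ : Fin n) => y) (Matrix.of fun (_ _ : Fin 1) => z)).det := by
    refine Continuous.matrix_det ?_
    refine Continuous.matrix_fromBlocks continuous_const continuous_const continuous_const ?_
    exact continuous_pi fun _ => continuous_pi fun _ => continuous_id
  refine congrFun (hc.ext_on (dense_compl_singleton (0 : ℂ))
    (g := fun z => z * f - x * y * g) (by fun_prop) ?_) z
  intro z hz
  have hz : z ≠ 0 := hz
  have hdet : (Matrix.of fun (_ _ : Fin 1) => z).det = z := by simp
  have : Invertible (Matrix.of fun (_ _ : Fin 1) => z) :=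
    Matrix.invertibleOfIsUnitDet _ (by rw [hdet]; exact hz.isUnit)
  have hinv : ⅟(Matrix.of fun (_ _ : Fin 1) => z) = Matrix.of fun (_ _ : Fin 1) => z⁻¹ := by
    refine invOf_eq_right_inv ?_
    ext i j
    fin_cases i; fin_cases j
    simp [Matrix.mul_apply, hz]
  have h2 := hV (-(x * y / z))
  simp only
  rw [Matrix.det_fromBlocks₂₂, hdet, hinv]
  rw [show V - (Matrix.of fun (_ : Fin n) (_ : Fin 1) => x) * (Matrix.of fun (_ _ : Fin 1) => z⁻¹) *
      (Matrix.of fun (_ : Fin 1) (_ : Fin n) => y) = V + Matrix.of fun _ _ => -(x * y / z) by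
    ext i j
    simp [Matrix.mul_apply]
    ring, h2]
  field_simp
  ring

theorem det_semisep_add (d l u : ℕ → ℂ) (n : ℕ) : ∀ t : ℂ,
    (Matrix.of fun i j : Fin n => semisep d l u i j + t).det =
      (semisepDet d l u n).1 + t * (semisepDet d l u n).2 := by
  induction n with
  | zero => intro t; simp [semisepDet]
  | succ n ih =>
    intro t
    have h := det_bordered (Matrix.of fun i j : Fin n => semisep d l u i j + t)
      ((semisepDet d l u n).1 + t * (semisepDet d l u n).2) (semisepDet d l u n).2
      (fun s => by
        rw [show (Matrix.of fun i j : Fin n => semisep d l u i j + t) + Matrix.of (fun _ _ => s)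
          = Matrix.of fun i j : Fin n => semisep d l u i j + (t + s) by
            ext i j; simp [add_assoc], ih]
        ring) (u n + t) (l n + t) (d n + t)
    rw [← Matrix.det_submatrix_equiv_self finSumFinEquiv]
    rw [show (Matrix.of fun i j : Fin (n + 1) => semisep d l u i j + t).submatrix
        finSumFinEquiv finSumFinEquiv = Matrix.fromBlocks
        (Matrix.of fun i j : Fin n => semisep d l u i j + t)
        (Matrix.of fun (_ : Fin n) (_ : Fin 1) => u n + t)
        (Matrix.of fun (_ : Fin 1) (_ : Fin n) => l n + t)
        (Matrix.of fun (_ _ : Fin 1) => d n + t) by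
      ext i j
      rcases i with i | i <;> rcases j with j | j
      · simp
      · have := i.2
        simp only [Matrix.submatrix_apply, Matrix.of_apply, finSumFinEquiv_apply_left,
          finSumFinEquiv_apply_right, Matrix.fromBlocks_apply₁₂, Fin.val_castAdd, Fin.val_natAdd,
          semisep, Fin.val_eq_zero, add_zero]
        rw [if_neg (by omega), if_neg (by omega)]
      · simp only [Matrix.submatrix_apply, Matrix.of_apply, finSumFinEquiv_apply_left,
          finSumFinEquiv_apply_right, Matrix.fromBlocks_apply₂₁, Fin.val_castAdd, Fin.val_natAdd,
          semisep, Fin.val_eq_zero, add_zero]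
        rw [if_pos j.2]
      · simp [semisep], h]
    simp only [semisepDet]
    ring

theorem det_semisep (d l u : ℕ → ℂ) (n : ℕ) :
    (Matrix.of fun i j : Fin n => semisep d l u i j).det = (semisepDet d l u n).1 := by
  simpa using det_semisep_add d l u n 0

/-- The diagonal entry of the matrix of `qForm` in the little q-Jacobi basis after dividing row and
column `i` by `lqjVal q a b i`. -/
noncomputable def semiDiag (q a b : ℂ) (i : ℕ) : ℂ :=
  q ^ i * mixedMoment q a b i i / lqjVal q a b i ^ 2

/-- After scaling by `lqjVal`, the matrix of `qForm` in the little q-Jacobi basis is lower triangular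
with constant rows below the diagonal; antisymmetrizing with weight `c` gives a `semisep` matrix. -/
theorem det_qMatrix {q a b : ℂ} (c : ℂ) (hq : q ≠ 0) (ha : a ≠ 0) (hb : b ≠ 0)
    (hab : ∀ k : ℕ, 1 - a * b * q ^ k ≠ 0) (hv : ∀ k, lqjVal q a b k ≠ 0) (n : ℕ) :
    (qMatrix q a b c n).det = (∏ i ∈ Finset.range n, lqjVal q a b i ^ 2) *
      (semisepDet (fun i => (1 - c) * semiDiag q a b i)
        (fun i => semiDiag q a b i * (1 - 1 / (a * b * q ^ (2 * i + 1))))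
        (fun i => -c * (semiDiag q a b i * (1 - 1 / (a * b * q ^ (2 * i + 1))))) n).1 := by
  have h1 : ∀ i j : ℕ, j < i → qForm q a b (lqj q b i a) (lqj q b j a) =
      lqjVal q a b i * (lqjVal q a b j *
        (semiDiag q a b i * (1 - 1 / (a * b * q ^ (2 * i + 1))))) := by
    intro i j hij
    have h := qForm_lqj_of_lt hq ha hb hab hij
    obtain ⟨i, rfl⟩ : ∃ k, i = k + 1 := ⟨i - 1, by omega⟩
    have h' := qForm_lqj_one hq ha hb hab i
    have := hv (i + 1)
    rw [h, semiDiag, div_mul_eq_mul_div, ← h']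
    field_simp
  have h2 : ∀ i j : ℕ, i < j → qForm q a b (lqj q b i a) (lqj q b j a) = 0 := by
    intro i j hij
    rw [qForm, mul_comm, qL_lqj_mul hab j, Polynomial.coeff_eq_zero_of_natDegree_lt, zero_mul]
    · refine Polynomial.natDegree_comp_le.trans_lt ?_
      rw [(lqj_monic q b i a).2]
      exact ((Nat.mul_le_mul_left i (by compute_degree)).trans_eq (mul_one i)).trans_lt hij
    · refine Polynomial.natDegree_comp_le.trans ?_
      rw [(lqj_monic q b i a).2]
      exact ((Nat.mul_le_mul_left i (by compute_degree)).trans_eq (mul_one i)).trans hij.le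
  rw [det_qMatrix_eq, ← det_semisep]
  rw [show (Matrix.of fun i j : Fin n => qForm q a b (lqj q b i a) (lqj q b j a) -
        c * qForm q a b (lqj q b j a) (lqj q b i a)) =
      Matrix.of fun i j : Fin n => lqjVal q a b i * (Matrix.of fun i j : Fin n =>
        lqjVal q a b j * (Matrix.of fun i j : Fin n =>
          semisep (fun i => (1 - c) * semiDiag q a b i)
          (fun i => semiDiag q a b i * (1 - 1 / (a * b * q ^ (2 * i + 1))))
          (fun i => -c * (semiDiag q a b i * (1 - 1 / (a * b * q ^ (2 * i + 1))))) i j) i j) i j by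
    ext i j
    simp only [Matrix.of_apply, semisep]
    rcases lt_trichotomy (i : ℕ) (j : ℕ) with hij | hij | hij
    · rw [if_neg (by omega), if_neg (by omega), h2 _ _ hij, h1 _ _ hij]
      ring
    · rw [if_neg (by omega), if_pos hij, hij, qForm_lqj_self hab, semiDiag]
      have := hv j
      field_simp
    · rw [if_pos hij, h2 _ _ hij, h1 _ _ hij]
      ring]
  rw [Matrix.det_mul_column, Matrix.det_mul_row, ← mul_assoc,
    Fin.prod_univ_eq_prod_range (fun i => lqjVal q a b i), ← Finset.prod_mul_distrib]
  simp only [sq]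

/-! ### Contiguous relation for the basic hypergeometric sum -/

/-- The part of the `k`-th term of the `₄φ₃` series that does not involve the two numerator
parameters `x`, `y` of `awSum`. -/
noncomputable def awWeight (q a b c : ℂ) (k : ℕ) : ℂ :=
  qPoch (q ^ 2) (a * c * q) k /
    (qPoch q q k * qPoch q (a * q) k * qPoch (q ^ 2) (a * b * c * q) k)

/-- The `₄φ₃` series truncated after the `N`-th term, with the numerator parameters `q^{-n}` and
`a b q^n` replaced by free variables `x` and `y`. -/
noncomputable def awSum (q a b c : ℂ) (N : ℕ) (x y : ℂ) : ℂ :=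
  ∑ k ∈ Finset.range (N + 1), qPoch q x k * qPoch q y k * (awWeight q a b c k * q ^ k)

theorem awSum_contiguous_aux {q a c x y z : ℂ} (hq : q ≠ 0)
    (h1 : x - y ≠ 0) (h2 : x - q * y ≠ 0) (h3 : x * q - y ≠ 0) :
    (1 - q * z) * (1 - a * q * z) * (1 - c * q * (x * y) * z ^ 2) + q * z *
      ((x - a * q) * (x - c * q * y) / ((x - y) * (x - q * y)) *
        ((1 - x / q) * (1 - y * q * z) * (1 - y * z) - (1 - y) * ((1 - x * z) * (1 - y * z))) +
       (a * q - y) * (c * x * q - y) / ((x * q - y) * (x - y)) *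
        ((1 - y / q) * (1 - x * q * z) * (1 - x * z) - (1 - x) * ((1 - x * z) * (1 - y * z))) +
       (1 - a * c * q) * ((1 - x * z) * (1 - y * z))) =
      (1 - x * z) * (1 - y * z) * (1 - a * c * q ^ 3 * z ^ 2) := by
  have h3' : q * x - y ≠ 0 := by rwa [mul_comm]
  field_simp
  ring

/-- The Askey-Wilson contiguous relation for the truncated series. The right-hand side is the boundary
term of a telescoping sum, whose summand identity is `awSum_contiguous_aux`; it vanishes as soon as
`x = q^{-m}` with `m < N`. -/
theorem awSum_partial {q a b c x y : ℂ} (hq : q ≠ 0) (hxy : x * y = a * b)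
    (h1 : x - y ≠ 0) (h2 : x - q * y ≠ 0) (h3 : x * q - y ≠ 0) (N : ℕ)
    (hden : ∀ k ≤ N, qPoch q q k ≠ 0 ∧ qPoch q (a * q) k ≠ 0 ∧
      qPoch (q ^ 2) (a * b * c * q) k ≠ 0) :
    (x - a * q) * (x - c * q * y) / ((x - y) * (x - q * y)) * (1 - y) *
        (awSum q a b c N (x / q) (y * q) - awSum q a b c N x y) +
      (a * q - y) * (c * x * q - y) / ((x * q - y) * (x - y)) * (1 - x) *
        (awSum q a b c N (x * q) (y / q) - awSum q a b c N x y) +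
      (1 - a * c * q) * awSum q a b c N x y =
    qPoch q x N * qPoch q y N * awWeight q a b c N * (1 - a * c * q * (q ^ N) ^ 2) := by
  induction N with
  | zero => simp [awSum, awWeight, qPoch_zero]
  | succ N ih =>
    have ih := ih fun k hk => hden k (by omega)
    obtain ⟨d1, d2, d3⟩ := hden (N + 1) le_rfl
    rw [qPoch_succ] at d1 d2 d3
    have e1 := right_ne_zero_of_mul d1
    have e2 := right_ne_zero_of_mul d2
    have e3 := right_ne_zero_of_mul d3
    have hw : awWeight q a b c (N + 1) = awWeight q a b c N * (1 - a * c * q * (q ^ N) ^ 2) /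
        ((1 - q * q ^ N) * (1 - a * q * q ^ N) * (1 - c * q * (x * y) * (q ^ N) ^ 2)) := by
      rw [awWeight, awWeight, qPoch_succ, qPoch_succ, qPoch_succ, qPoch_succ, hxy,
        div_mul_eq_mul_div, div_div]
      congr 1 <;> ring
    have hx : (1 - x) * qPoch q (x * q) N = qPoch q x N * (1 - x * q ^ N) := by
      rw [← qPoch_succ', qPoch_succ]
    have hy : (1 - y) * qPoch q (y * q) N = qPoch q y N * (1 - y * q ^ N) := by
      rw [← qPoch_succ', qPoch_succ]
    have k1 : (1 - y) * (qPoch q (x / q) (N + 1) * qPoch q (y * q) (N + 1)) =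
        qPoch q x N * qPoch q y N *
          ((1 - x / q) * (1 - y * q * q ^ N) * (1 - y * q ^ N)) := by
      rw [qPoch_succ' q (x / q), div_mul_cancel₀ _ hq, qPoch_succ q (y * q)]
      linear_combination (1 - x / q) * qPoch q x N * (1 - y * q * q ^ N) * hy
    have k2 : (1 - x) * (qPoch q (x * q) (N + 1) * qPoch q (y / q) (N + 1)) =
        qPoch q x N * qPoch q y N *
          ((1 - y / q) * (1 - x * q * q ^ N) * (1 - x * q ^ N)) := by
      rw [qPoch_succ' q (y / q), div_mul_cancel₀ _ hq, qPoch_succ q (x * q)]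
      linear_combination (1 - y / q) * qPoch q y N * (1 - x * q * q ^ N) * hx
    have haux := awSum_contiguous_aux (a := a) (c := c) (z := q ^ N) hq h1 h2 h3
    have hs : ∀ x y, awSum q a b c (N + 1) x y = awSum q a b c N x y +
        qPoch q x (N + 1) * qPoch q y (N + 1) * (awWeight q a b c (N + 1) * q ^ (N + 1)) :=
      fun x y => Finset.sum_range_succ _ _
    have k3 : qPoch q x (N + 1) = qPoch q x N * (1 - x * q ^ N) := qPoch_succ q x N
    have k4 : qPoch q y (N + 1) = qPoch q y N * (1 - y * q ^ N) := qPoch_succ q y N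
    have e3' : 1 - c * q * (x * y) * (q ^ N) ^ 2 ≠ 0 := by
      rw [hxy]; convert e3 using 2; ring
    have hw' : awWeight q a b c (N + 1) *
        ((1 - q * q ^ N) * (1 - a * q * q ^ N) * (1 - c * q * (x * y) * (q ^ N) ^ 2)) =
        awWeight q a b c N * (1 - a * c * q * (q ^ N) ^ 2) := by
      rw [hw, div_mul_cancel₀]
      exact mul_ne_zero (mul_ne_zero e1 e2) e3'
    rw [hs, hs, hs]
    rw [show q ^ (N + 1) = q * q ^ N by ring]
    generalize (x - a * q) * (x - c * q * y) / ((x - y) * (x - q * y)) = A at *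
    generalize (a * q - y) * (c * x * q - y) / ((x * q - y) * (x - y)) = C at *
    generalize awWeight q a b c (N + 1) = w' at *
    generalize awWeight q a b c N = w at *
    generalize qPoch q (x / q) (N + 1) = p1 at *
    generalize qPoch q (y * q) (N + 1) = p2 at *
    generalize qPoch q (x * q) (N + 1) = p3 at *
    generalize qPoch q (y / q) (N + 1) = p4 at *
    rw [k3, k4]
    linear_combination ih + A * (w' * (q * q ^ N)) * k1 + C * (w' * (q * q ^ N)) * k2 +
      qPoch q x N * qPoch q y N * w' * haux - qPoch q x N * qPoch q y N * hw'

/-! ### Normalization and diagonal entries -/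

/-- The normalization relating the determinant to the `₄φ₃` sum: the determinant of size `n` is
`rho q a b c n` times the product of the diagonal entries `q ^ i * mixedMoment q a b i i` times the
sum. -/
noncomputable def rho (q a b c : ℂ) (n : ℕ) : ℂ :=
  ∏ i ∈ Finset.range n, -((1 - a * b * c * q ^ (2 * i + 1)) * (1 - a * q ^ (i + 1)) /
    (a * q ^ (i + 1) * (1 - b * q ^ i)))

theorem prod_pow_sub_succ (q : ℂ) (i : ℕ) :
    ∏ r ∈ Finset.range (i + 1), q ^ r * (q ^ r - q ^ (i + 1)) =
      q ^ (2 * i) * (1 - q ^ (i + 1)) * ∏ r ∈ Finset.range i, q ^ r * (q ^ r - q ^ i) := by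
  rw [Finset.prod_range_succ']
  have : ∀ r ∈ Finset.range i, q ^ (r + 1) * (q ^ (r + 1) - q ^ (i + 1)) =
      q ^ 2 * (q ^ r * (q ^ r - q ^ i)) := fun r _ => by ring
  rw [Finset.prod_congr rfl this, Finset.prod_mul_distrib, Finset.prod_const, Finset.card_range,
    ← pow_mul]
  ring

theorem prod_pow_sub (q : ℂ) (i : ℕ) :
    ∏ r ∈ Finset.range i, q ^ r * (q ^ r - q ^ i) = q ^ (i * (i - 1)) * qPoch q q i := by
  induction i with
  | zero => simp [qPoch_zero]
  | succ i ih =>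
    rw [prod_pow_sub_succ, ih, qPoch_succ]
    obtain _ | i := i
    · simp [mul_comm]
    · simp only [Nat.add_sub_cancel]
      ring

theorem mixedMoment_diag_succ (q a b : ℂ) (i : ℕ) :
    mixedMoment q a b (i + 1) (i + 1) = mixedMoment q a b i i *
      ((1 - a * q ^ (i + 1)) * (1 - a * b * q ^ (i + 1)) * (1 - b * q ^ (i + 1)) * (a * q) *
        q ^ (2 * i) * (1 - q ^ (i + 1)) /
      ((1 - a * b * q ^ (2 * i + 2)) * (1 - a * b * q ^ (2 * i + 3)) *
        ((1 - a * b * q ^ (2 * i + 1)) * (1 - a * b * q ^ (2 * i + 2))))) := by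
  rw [mixedMoment, mixedMoment, prod_pow_sub_succ, show i + 1 + (i + 1) = i + i + 1 + 1 by ring,
    mul_add_one, show 2 * i + 2 = 2 * i + 1 + 1 by rfl]
  simp only [qPoch_succ]
  rw [show a * b * q ^ 2 * q ^ (i + i) = a * b * q ^ (2 * i + 2) by ring,
    show a * b * q ^ 2 * q ^ (i + i + 1) = a * b * q ^ (2 * i + 3) by ring,
    show a * b * q * q ^ (2 * i) = a * b * q ^ (2 * i + 1) by ring,
    show a * b * q * q ^ (2 * i + 1) = a * b * q ^ (2 * i + 2) by ring,
    show a * b * q * q ^ i = a * b * q ^ (i + 1) by ring,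
    show a * q * q ^ i = a * q ^ (i + 1) by ring,
    show b * q * q ^ i = b * q ^ (i + 1) by ring, ← mul_div_mul_comm]
  congr 1 <;> ring

theorem semiDiag_succ {q a b : ℂ} (hb : b ≠ 0)
    (hab : ∀ k : ℕ, 1 - a * b * q ^ k ≠ 0)
    (hbk : ∀ k : ℕ, 1 - b * q ^ k ≠ 0) (i : ℕ) :
    semiDiag q a b (i + 1) = semiDiag q a b i *
      (a * b ^ 2 * q ^ (2 * i + 4) * (1 - a * q ^ (i + 1)) * (1 - q ^ (i + 1)) *
        (1 - a * b * q ^ (2 * i + 1)) /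
      ((1 - a * b * q ^ (i + 1)) * (1 - a * b * q ^ (2 * i + 3)) * (1 - b * q ^ (i + 1)))) := by
  have k1 := hab (2 * i + 1)
  have k2 := hab (2 * i + 2)
  have k3 := hab (2 * i + 3)
  have k4 := hab (i + 1)
  have k5 := hbk (i + 1)
  rw [semiDiag, semiDiag, mixedMoment_diag_succ, lqjVal_succ]
  generalize 1 - a * b * q ^ (2 * i + 1) = D1 at *
  generalize 1 - a * b * q ^ (2 * i + 2) = D2 at *
  generalize 1 - a * b * q ^ (2 * i + 3) = D3 at *
  generalize 1 - a * b * q ^ (i + 1) = D4 at *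
  generalize 1 - b * q ^ (i + 1) = D5 at *
  generalize 1 - a * q ^ (i + 1) = D6 at *
  generalize 1 - q ^ (i + 1) = D7 at *
  by_cases hv : lqjVal q a b i = 0
  · simp [hv]
  field_simp
  ring

/-! ### Matching the two recurrences -/

/-- The algebra of the induction step in `semisepDet_eq`: with `z = q ^ n`, the three-term recurrence
`H` for consecutive sums `S0, S1, S2` is rewritten in the normalization of the determinant
recursion. -/
theorem awSum_step_aux {q a b c z S0 S1 S2 : ℂ} (hq : q ≠ 0) (ha : a ≠ 0) (hb : b ≠ 0) (hz : z ≠ 0)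
    (h1 : 1 - a * b * q * z ^ 2 ≠ 0) (h2 : 1 - a * b * q ^ 2 * z ^ 2 ≠ 0)
    (h3 : 1 - a * b * q ^ 3 * z ^ 2 ≠ 0) (h4 : 1 - a * b * q * z ≠ 0)
    (h5 : 1 - b * z ≠ 0) (h6 : 1 - b * q * z ≠ 0)
    (H : (1 / (q * z) - a * q) * (1 / (q * z) - c * q * (a * b * q * z)) /
          ((1 / (q * z) - a * b * q * z) * (1 / (q * z) - q * (a * b * q * z))) *
          (1 - a * b * q * z) * (S2 - S1) +
        (a * q - a * b * q * z) * (c * (1 / (q * z)) * q - a * b * q * z) /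
          ((1 / (q * z) * q - a * b * q * z) * (1 / (q * z) - a * b * q * z)) *
          (1 - 1 / (q * z)) * (S0 - S1) + (1 - a * c * q) * S1 = 0) :
    (1 - 1 / (a * b * q ^ 3 * z ^ 2)) ^ 2 *
        (a * b ^ 2 * q ^ 4 * z ^ 2 * (1 - a * q * z) * (1 - q * z) * (1 - a * b * q * z ^ 2) /
          ((1 - a * b * q * z) * (1 - a * b * q ^ 3 * z ^ 2) * (1 - b * q * z))) *
        (c * (1 - 1 / (a * b * q * z ^ 2)) ^ 2 * S0 + (1 - c) * (1 / (a * b * q * z ^ 2)) *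
          (-((1 - a * b * c * q * z ^ 2) * (1 - a * q * z) / (a * q * z * (1 - b * z))) * S1 -
            (1 - c) * S0)) =
      (1 - 1 / (a * b * q * z ^ 2)) ^ 2 *
      (-((1 - a * b * c * q * z ^ 2) * (1 - a * q * z) / (a * q * z * (1 - b * z))) *
        (-((1 - a * b * c * q ^ 3 * z ^ 2) * (1 - a * q ^ 2 * z) /
          (a * q ^ 2 * z * (1 - b * q * z))) * S2 - (1 - c) * S1)) := by
  -- Each coefficient of `H` has its powers of `q * z` cleared before denominators are combined.
  have e1 : (1 / (q * z) - a * q) * (1 / (q * z) - c * q * (a * b * q * z)) /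
          ((1 / (q * z) - a * b * q * z) * (1 / (q * z) - q * (a * b * q * z))) =
      (1 - a * q ^ 2 * z) * (1 - a * b * c * q ^ 3 * z ^ 2) /
        ((1 - a * b * q ^ 2 * z ^ 2) * (1 - a * b * q ^ 3 * z ^ 2)) := by
    rw [show 1 / (q * z) - a * b * q * z = (1 - a * b * q ^ 2 * z ^ 2) / (q * z) by field_simp,
      show 1 / (q * z) - q * (a * b * q * z) = (1 - a * b * q ^ 3 * z ^ 2) / (q * z) by field_simp,
      show 1 / (q * z) - a * q = (1 - a * q ^ 2 * z) / (q * z) by field_simp,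
      show 1 / (q * z) - c * q * (a * b * q * z) = (1 - a * b * c * q ^ 3 * z ^ 2) / (q * z) by
        field_simp]
    field_simp
  have e2 : (a * q - a * b * q * z) * (c * (1 / (q * z)) * q - a * b * q * z) /
          ((1 / (q * z) * q - a * b * q * z) * (1 / (q * z) - a * b * q * z)) *
          (1 - 1 / (q * z)) =
      a * q * (1 - b * z) * (c - a * b * q * z ^ 2) * (q * z - 1) /
        ((1 - a * b * q * z ^ 2) * (1 - a * b * q ^ 2 * z ^ 2)) := by
    rw [show 1 / (q * z) - a * b * q * z = (1 - a * b * q ^ 2 * z ^ 2) / (q * z) by field_simp,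
      show 1 / (q * z) * q - a * b * q * z = (1 - a * b * q * z ^ 2) / z by field_simp,
      show c * (1 / (q * z)) * q - a * b * q * z = (c - a * b * q * z ^ 2) / z by
        field_simp, show 1 - 1 / (q * z) = (q * z - 1) / (q * z) by field_simp]
    field_simp
  rw [e1, e2] at H
  clear e1 e2
  have H' : (1 - a * q ^ 2 * z) * (1 - a * b * c * q ^ 3 * z ^ 2) * (1 - a * b * q * z) *
        (1 - a * b * q * z ^ 2) * (S2 - S1) +
      a * q * (1 - b * z) * (c - a * b * q * z ^ 2) * (q * z - 1) *
        (1 - a * b * q ^ 3 * z ^ 2) * (S0 - S1) +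
      (1 - a * c * q) * S1 * ((1 - a * b * q * z ^ 2) * (1 - a * b * q ^ 2 * z ^ 2) *
        (1 - a * b * q ^ 3 * z ^ 2)) = 0 := by
    have := congrArg (· * ((1 - a * b * q * z ^ 2) * (1 - a * b * q ^ 2 * z ^ 2) *
        (1 - a * b * q ^ 3 * z ^ 2))) H
    simp only [zero_mul] at this
    rw [← this]
    generalize 1 - a * b * q * z ^ 2 = D1 at *
    generalize 1 - a * b * q ^ 2 * z ^ 2 = D2 at *
    generalize 1 - a * b * q ^ 3 * z ^ 2 = D3 at *
    field_simp
  obtain ⟨D1, hD1⟩ : ∃ D, D = 1 - a * b * q * z ^ 2 := ⟨_, rfl⟩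
  obtain ⟨D3, hD3⟩ : ∃ D, D = 1 - a * b * q ^ 3 * z ^ 2 := ⟨_, rfl⟩
  obtain ⟨D4, hD4⟩ : ∃ D, D = 1 - a * b * q * z := ⟨_, rfl⟩
  obtain ⟨D5, hD5⟩ : ∃ D, D = 1 - b * z := ⟨_, rfl⟩
  obtain ⟨D6, hD6⟩ : ∃ D, D = 1 - b * q * z := ⟨_, rfl⟩
  rw [show 1 - 1 / (a * b * q * z ^ 2) = -D1 / (a * b * q * z ^ 2) by rw [hD1]; field_simp; ring,
    show 1 - 1 / (a * b * q ^ 3 * z ^ 2) = -D3 / (a * b * q ^ 3 * z ^ 2) by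
      rw [hD3]; field_simp; ring]
  rw [← hD1] at h1 ⊢
  rw [← hD3] at h3 ⊢
  rw [← hD4] at h4 ⊢
  rw [← hD5] at h5 ⊢
  rw [← hD6] at h6 ⊢
  rw [← sub_eq_zero]
  -- The difference of the two sides is an explicit multiple of the cleared recurrence `H'`.
  have : ∀ K X Y : ℂ, Y = 0 → X = K * Y → X = 0 := by rintro K X Y rfl h; simpa using h
  refine this (-((1 - a * b * c * q * z ^ 2) * (1 - a * q * z) * D1 /
    (a ^ 4 * b ^ 2 * q ^ 5 * z ^ 6 * D5 * D6 * D4))) _ _ H' ?_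
  clear H H' this
  field_simp
  rw [hD1, hD3, hD4, hD5, hD6]
  ring

/-- The `₄φ₃` sum at level `m`, that is `awSum` at `x = q^{-m}`, `y = a b q^m`. For `m ≤ N` the
series terminates within the range of summation. -/
noncomputable def awVal (q a b c : ℂ) (N m : ℕ) : ℂ :=
  awSum q a b c N (1 / q ^ m) (a * b * q ^ m)

theorem awVal_zero (q a b c : ℂ) (N : ℕ) : awVal q a b c N 0 = 1 := by
  rw [awVal, awSum, Finset.sum_eq_single_of_mem 0 (by simp)]
  · simp [qPoch_zero, awWeight]
  · intro k _ hk
    obtain ⟨k, rfl⟩ := Nat.exists_eq_succ_of_ne_zero hk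
    rw [Nat.succ_eq_add_one, qPoch_succ']
    simp

theorem awVal_one {q : ℂ} (hq : q ≠ 0) (a b c : ℂ) (N : ℕ) :
    awVal q a b c (N + 1) 1 = 1 + (1 - 1 / q) * (1 - a * b * q) *
      ((1 - a * c * q) / ((1 - q) * (1 - a * q) * (1 - a * b * c * q)) * q) := by
  rw [awVal, awSum, ← Finset.sum_subset (Finset.range_subset_range.2 (show 2 ≤ N + 1 + 1 by omega))]
  · simp [Finset.sum_range_succ, qPoch, awWeight]
  · intro k _ hk
    obtain ⟨k, rfl⟩ : ∃ l, k = l + 1 + 1 := ⟨k - 2, by simp at hk; omega⟩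
    rw [qPoch_succ', qPoch_succ', pow_one, one_div, inv_mul_cancel₀ hq]
    simp

theorem qPoch_one_div_pow {q : ℂ} (hq : q ≠ 0) {m N : ℕ} (h : m < N) :
    qPoch q (1 / q ^ m) N = 0 :=
  Finset.prod_eq_zero (Finset.mem_range.2 h) (by rw [one_div_mul_cancel (pow_ne_zero _ hq), sub_self])

/-- The three-term recurrence in the level, valid strictly below the truncation bound. -/
theorem awVal_recurrence {q a b c : ℂ} (hq : q ≠ 0) (hab : ∀ k : ℕ, 1 - a * b * q ^ k ≠ 0)
    {n N : ℕ} (hn : n + 1 < N) (hden : ∀ k ≤ N, qPoch q q k ≠ 0 ∧ qPoch q (a * q) k ≠ 0 ∧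
      qPoch (q ^ 2) (a * b * c * q) k ≠ 0) :
    (1 / (q * q ^ n) - a * q) * (1 / (q * q ^ n) - c * q * (a * b * q * q ^ n)) /
        ((1 / (q * q ^ n) - a * b * q * q ^ n) * (1 / (q * q ^ n) - q * (a * b * q * q ^ n))) *
        (1 - a * b * q * q ^ n) * (awVal q a b c N (n + 2) - awVal q a b c N (n + 1)) +
      (a * q - a * b * q * q ^ n) * (c * (1 / (q * q ^ n)) * q - a * b * q * q ^ n) /
        ((1 / (q * q ^ n) * q - a * b * q * q ^ n) * (1 / (q * q ^ n) - a * b * q * q ^ n)) *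
        (1 - 1 / (q * q ^ n)) * (awVal q a b c N n - awVal q a b c N (n + 1)) +
      (1 - a * c * q) * awVal q a b c N (n + 1) = 0 := by
  have hz : q ^ n ≠ 0 := pow_ne_zero n hq
  have h1 : 1 / (q * q ^ n) - a * b * q * q ^ n ≠ 0 := by
    rw [show 1 / (q * q ^ n) - a * b * q * q ^ n = (1 - a * b * q ^ (2 * n + 2)) / (q * q ^ n) by
      field_simp; ring]
    exact div_ne_zero (hab _) (mul_ne_zero hq hz)
  have h2 : 1 / (q * q ^ n) - q * (a * b * q * q ^ n) ≠ 0 := by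
    rw [show 1 / (q * q ^ n) - q * (a * b * q * q ^ n) =
      (1 - a * b * q ^ (2 * n + 3)) / (q * q ^ n) by field_simp; ring]
    exact div_ne_zero (hab _) (mul_ne_zero hq hz)
  have h3 : 1 / (q * q ^ n) * q - a * b * q * q ^ n ≠ 0 := by
    rw [show 1 / (q * q ^ n) * q - a * b * q * q ^ n =
      (1 - a * b * q ^ (2 * n + 1)) / (q ^ n) by field_simp; ring]
    exact div_ne_zero (hab _) hz
  have h := awSum_partial (b := b) (c := c) hq (show 1 / (q * q ^ n) * (a * b * q * q ^ n) = a * b by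
    field_simp) h1 h2 h3 N hden
  rw [show q * q ^ n = q ^ (n + 1) by ring, qPoch_one_div_pow hq hn, zero_mul, zero_mul, zero_mul,
    show q ^ (n + 1) = q * q ^ n by ring] at h
  have s1 : awVal q a b c N (n + 2) =
      awSum q a b c N (1 / (q * q ^ n) / q) (a * b * q * q ^ n * q) := by
    rw [awVal]
    congr 1
    · rw [div_div]; congr 1; ring
    · ring
  have s2 : awVal q a b c N (n + 1) = awSum q a b c N (1 / (q * q ^ n)) (a * b * q * q ^ n) := by
    rw [awVal, pow_succ', mul_assoc (a * b) q]
  have s3 : awVal q a b c N n =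
      awSum q a b c N (1 / (q * q ^ n) * q) (a * b * q * q ^ n / q) := by
    rw [awVal]
    congr 1 <;> field_simp
  rw [s1, s2, s3]
  exact h

theorem rho_succ (q a b c : ℂ) (n : ℕ) : rho q a b c (n + 1) = rho q a b c n *
    -((1 - a * b * c * q * (q ^ n) ^ 2) * (1 - a * q * q ^ n) /
      (a * q * q ^ n * (1 - b * q ^ n))) := by
  rw [rho, Finset.prod_range_succ, ← rho,
    show a * b * c * q ^ (2 * n + 1) = a * b * c * q * (q ^ n) ^ 2 by ring,
    show a * q ^ (n + 1) = a * q * q ^ n by ring]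

/-- The determinant recursion and the Askey-Wilson recurrence have the same solution. The second
component of `semisepDet` is determined by two consecutive sums, which makes the induction close;
it requires the level `n + 1` to stay within the truncation bound `N`. -/
theorem semisepDet_eq {q a b c : ℂ} (hq : q ≠ 0) (ha : a ≠ 0) (hb : b ≠ 0)
    (hab : ∀ k : ℕ, 1 - a * b * q ^ k ≠ 0) (hbk : ∀ k : ℕ, 1 - b * q ^ k ≠ 0)
    {n N : ℕ} (hn : n < N) (hden : ∀ k ≤ N, qPoch q q k ≠ 0 ∧ qPoch q (a * q) k ≠ 0 ∧
      qPoch (q ^ 2) (a * b * c * q) k ≠ 0) (p : ℂ × ℂ)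
    (hp : p = semisepDet (fun i => (1 - c) * semiDiag q a b i)
        (fun i => semiDiag q a b i * (1 - 1 / (a * b * q ^ (2 * i + 1))))
        (fun i => -c * (semiDiag q a b i * (1 - 1 / (a * b * q ^ (2 * i + 1))))) n) :
    p.1 = (∏ i ∈ Finset.range n, semiDiag q a b i) * (rho q a b c n * awVal q a b c N n) ∧
    c * (1 - 1 / (a * b * q ^ (2 * n + 1))) ^ 2 * semiDiag q a b n * p.2 =
      (∏ i ∈ Finset.range n, semiDiag q a b i) *
        (rho q a b c (n + 1) * awVal q a b c N (n + 1) -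
          (1 - c) * (rho q a b c n * awVal q a b c N n)) := by
  induction n generalizing p with
  | zero =>
    obtain ⟨N, rfl⟩ : ∃ M, N = M + 1 := ⟨N - 1, by omega⟩
    obtain ⟨d1, d2, d3⟩ := hden 1 (by omega)
    have hb0 := hbk 0
    rw [hp]
    simp [qPoch] at d1 d2 d3 hb0
    simp only [semisepDet, awVal_zero, awVal_one hq, Finset.prod_range_zero, rho_succ, zero_add]
    simp only [rho, Finset.prod_range_zero, pow_zero, mul_one, one_pow, mul_zero, one_mul,
      true_and]
    obtain ⟨D, hD⟩ : ∃ D, D = 1 - a * b * c * q := ⟨_, rfl⟩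
    rw [← hD] at d3 ⊢
    field_simp
    rw [hD]
    ring
  | succ n ih =>
    have hz : q ^ n ≠ 0 := pow_ne_zero n hq
    obtain ⟨i1, i2⟩ := ih (by omega) _ rfl
    have h1 : 1 - a * b * q * (q ^ n) ^ 2 ≠ 0 := by
      have := hab (2 * n + 1); rwa [show a * b * q ^ (2 * n + 1) = a * b * q * (q ^ n) ^ 2 by ring] at this
    have h2 : 1 - a * b * q ^ 2 * (q ^ n) ^ 2 ≠ 0 := by
      have := hab (2 * n + 2); rwa [show a * b * q ^ (2 * n + 2) = a * b * q ^ 2 * (q ^ n) ^ 2 by ring] at this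
    have h3 : 1 - a * b * q ^ 3 * (q ^ n) ^ 2 ≠ 0 := by
      have := hab (2 * n + 3); rwa [show a * b * q ^ (2 * n + 3) = a * b * q ^ 3 * (q ^ n) ^ 2 by ring] at this
    have h4 : 1 - a * b * q * q ^ n ≠ 0 := by
      have := hab (n + 1); rwa [show a * b * q ^ (n + 1) = a * b * q * q ^ n by ring] at this
    have h6 : 1 - b * q * q ^ n ≠ 0 := by
      have := hbk (n + 1); rwa [show b * q ^ (n + 1) = b * q * q ^ n by ring] at this
    have he : 1 - 1 / (a * b * q * (q ^ n) ^ 2) ≠ 0 := by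
      rw [show 1 - 1 / (a * b * q * (q ^ n) ^ 2) =
        -((1 - a * b * q * (q ^ n) ^ 2) / (a * b * q * (q ^ n) ^ 2)) by field_simp; ring]
      exact neg_ne_zero.2 (div_ne_zero h1 (by simp [ha, hb, hq]))
    have key := awSum_step_aux hq ha hb hz h1 h2 h3 h4 (hbk n) h6 (awVal_recurrence hq hab hn hden)
    have hs := semiDiag_succ (a := a) hb hab hbk n
    rw [show a * b ^ 2 * q ^ (2 * n + 4) = a * b ^ 2 * q ^ 4 * (q ^ n) ^ 2 by ring,
      show a * q ^ (n + 1) = a * q * q ^ n by ring, show q ^ (n + 1) = q * q ^ n by ring,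
      show a * b * q ^ (2 * n + 1) = a * b * q * (q ^ n) ^ 2 by ring,
      show a * b * q ^ (2 * n + 3) = a * b * q ^ 3 * (q ^ n) ^ 2 by ring,
      show a * b * (q * q ^ n) = a * b * q * q ^ n by ring,
      show b * (q * q ^ n) = b * q * q ^ n by ring] at hs
    rw [show a * b * q ^ (2 * n + 1) = a * b * q * (q ^ n) ^ 2 by ring] at i2
    rw [semisepDet] at hp
    rw [hp, show 2 * (n + 1) + 1 = 2 * n + 3 by ring]
    simp only
    rw [show a * b * q ^ (2 * n + 3) = a * b * q ^ 3 * (q ^ n) ^ 2 by ring,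
      show a * b * q ^ (2 * n + 1) = a * b * q * (q ^ n) ^ 2 by ring, Finset.prod_range_succ]
    have hr := rho_succ q a b c (n + 1)
    rw [show a * b * c * q * (q ^ (n + 1)) ^ 2 = a * b * c * q ^ 3 * (q ^ n) ^ 2 by ring,
      show a * q * q ^ (n + 1) = a * q ^ 2 * q ^ n by ring,
      show b * q ^ (n + 1) = b * q * q ^ n by ring] at hr
    have hr0 := rho_succ q a b c n
    clear ih hp
    generalize semisepDet _ _ _ n = p at *
    constructor
    · linear_combination (1 - c) * semiDiag q a b n * i1 + semiDiag q a b n * i2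
    · refine mul_left_cancel₀ (pow_ne_zero 2 he) ?_
      rw [hr, hs, hr0]
      rw [hr0] at i2
      generalize -((1 - a * b * c * q * (q ^ n) ^ 2) * (1 - a * q * q ^ n) /
        (a * q * q ^ n * (1 - b * q ^ n))) = r at *
      generalize -((1 - a * b * c * q ^ 3 * (q ^ n) ^ 2) * (1 - a * q ^ 2 * q ^ n) /
        (a * q ^ 2 * q ^ n * (1 - b * q * q ^ n))) = r' at *
      generalize a * b ^ 2 * q ^ 4 * (q ^ n) ^ 2 * (1 - a * q * q ^ n) * (1 - q * q ^ n) *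
        (1 - a * b * q * (q ^ n) ^ 2) /
        ((1 - a * b * q * q ^ n) * (1 - a * b * q ^ 3 * (q ^ n) ^ 2) * (1 - b * q * q ^ n)) = R at *
      generalize 1 / (a * b * q * (q ^ n) ^ 2) = E at *
      generalize 1 - 1 / (a * b * q ^ 3 * (q ^ n) ^ 2) = F at *
      linear_combination
        (1 - E) ^ 2 * c * F ^ 2 * (semiDiag q a b n * R) * i1 +
          F ^ 2 * (semiDiag q a b n * R) * (1 - c) * E * i2 +
          (∏ i ∈ Finset.range n, semiDiag q a b i) * semiDiag q a b n * rho q a b c n * key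

/-! ### The determinant for generic parameters -/

/-- Only sums truncated at `n + 1` have denominators known to be nonzero, so `semisepDet_eq` is used
at `n` and one further step of the recursion, which needs only the values at `n`, gives size
`n + 1`. -/
theorem det_qMatrix_eq_prod {q a b c : ℂ} (hq : q ≠ 0) (ha : a ≠ 0) (hb : b ≠ 0)
    (hab : ∀ k : ℕ, 1 - a * b * q ^ k ≠ 0) (hbk : ∀ k : ℕ, 1 - b * q ^ k ≠ 0)
    (n : ℕ) (hden : ∀ k ≤ n + 1, qPoch q q k ≠ 0 ∧ qPoch q (a * q) k ≠ 0 ∧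
      qPoch (q ^ 2) (a * b * c * q) k ≠ 0) :
    (qMatrix q a b c (n + 1)).det = (∏ i ∈ Finset.range (n + 1), q ^ i * mixedMoment q a b i i) *
      (rho q a b c (n + 1) * awVal q a b c (n + 1) (n + 1)) := by
  have h0 : ∀ i, qPoch q (a * b * q) i ≠ 0 := fun i => qPoch_ne_zero fun k _ => by
    have := hab (k + 1); rwa [show a * b * q ^ (k + 1) = a * b * q * q ^ k by ring] at this
  have hv : ∀ i, lqjVal q a b i ≠ 0 := fun i => by
    refine div_ne_zero (mul_ne_zero (qPoch_ne_zero fun k _ => ?_) (h0 i))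
      (mul_ne_zero (pow_ne_zero _ (mul_ne_zero hb hq)) (h0 _))
    have := hbk (k + 1); rwa [show b * q ^ (k + 1) = b * q * q ^ k by ring] at this
  obtain ⟨i1, i2⟩ := semisepDet_eq hq ha hb hab hbk (Nat.lt_succ_self n) hden _ rfl
  have hs : ∀ i ∈ Finset.range (n + 1), q ^ i * mixedMoment q a b i i =
      lqjVal q a b i ^ 2 * semiDiag q a b i := fun i _ => by
    rw [semiDiag, mul_div_cancel₀ _ (pow_ne_zero 2 (hv i))]
  rw [det_qMatrix c hq ha hb hab hv, Finset.prod_congr rfl hs, Finset.prod_mul_distrib, mul_assoc]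
  congr 1
  rw [semisepDet, Finset.prod_range_succ]
  linear_combination (1 - c) * semiDiag q a b n * i1 + semiDiag q a b n * i2

theorem mixedMoment_self (q a b : ℂ) (i : ℕ) : mixedMoment q a b i i =
    qPoch q (a * q) i * qPoch q (a * b * q) i * qPoch q (b * q) i * (a * q) ^ i *
    (q ^ (i * (i - 1)) * qPoch q q i) / (qPoch q (a * b * q ^ 2) (2 * i) * qPoch q (a * b * q) (2 * i)) := by
  rw [mixedMoment, prod_pow_sub, two_mul]

/-- The factor in front of the `₄φ₃` sum in the determinant of size `n = m + 1`, with the product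
over `1 ≤ k ≤ n` reindexed by `j = k - 1` so that no truncated subtraction survives except in the
branch `j ≠ 0`. The divisions of exponents are exact. -/
noncomputable def detPrefactor (q a b c : ℂ) (m : ℕ) : ℂ :=
  (-1) ^ (m + 1) * a ^ ((((m + 1 : ℕ) : ℤ) * (((m + 1 : ℕ) : ℤ) - 3)) / 2) *
    q ^ ((((m + 1 : ℕ) : ℤ) * (((m + 1 : ℕ) : ℤ) + 1) * (2 * ((m + 1 : ℕ) : ℤ) - 5)) / 6) *
    qPoch (q ^ 2) (a * b * c * q) (m + 1) *
    ((∏ j ∈ Finset.range (m + 1), qPoch q q j * qPoch q (a * q) (j + 1) *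
      (if j = 0 then 1 / (1 - b) else qPoch q (b * q) (j - 1))) /
      ∏ j ∈ Finset.range (m + 1), qPoch q (a * b * q ^ 2) (m + j))

theorem prefactor_eq {q a b : ℂ} (c : ℂ) (hq : q ≠ 0) (ha : a ≠ 0)
    (hab : ∀ k : ℕ, 1 - a * b * q ^ k ≠ 0) (hbk : ∀ k : ℕ, 1 - b * q ^ k ≠ 0) (m : ℕ) :
    detPrefactor q a b c m =
    (∏ i ∈ Finset.range (m + 1), q ^ i * mixedMoment q a b i i) * rho q a b c (m + 1) := by
  unfold detPrefactor
  have hP : ∀ i, qPoch q (a * b * q ^ 2) i ≠ 0 := fun i => qPoch_ne_zero fun k _ => by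
    have := hab (k + 2); rwa [show a * b * q ^ (k + 2) = a * b * q ^ 2 * q ^ k by ring] at this
  induction m with
  | zero =>
    have hb0 := hbk 0
    rw [pow_zero, mul_one] at hb0
    simp [qPoch, mixedMoment, rho]
    field_simp
  | succ m ih =>
    have ea : (((m + 1 + 1 : ℕ) : ℤ) * (((m + 1 + 1 : ℕ) : ℤ) - 3)) / 2 =
        (((m + 1 : ℕ) : ℤ) * (((m + 1 : ℕ) : ℤ) - 3)) / 2 + (m : ℕ) := by
      rw [← Int.add_mul_ediv_right _ _ two_ne_zero]
      congr 1; push_cast; ring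
    have eq' : (((m + 1 + 1 : ℕ) : ℤ) * (((m + 1 + 1 : ℕ) : ℤ) + 1) *
        (2 * ((m + 1 + 1 : ℕ) : ℤ) - 5)) / 6 =
        (((m + 1 : ℕ) : ℤ) * (((m + 1 : ℕ) : ℤ) + 1) * (2 * ((m + 1 : ℕ) : ℤ) - 5)) / 6 +
          (m * (m + 2) : ℕ) := by
      rw [← Int.add_mul_ediv_right _ _ (by norm_num : (6 : ℤ) ≠ 0)]
      congr 1; push_cast; ring
    -- Shifting the window of the denominator product drops one factor and adds two.
    have eD : ∏ j ∈ Finset.range (m + 1 + 1), qPoch q (a * b * q ^ 2) (m + 1 + j) =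
        (∏ j ∈ Finset.range (m + 1), qPoch q (a * b * q ^ 2) (m + j)) *
          (qPoch q (a * b * q ^ 2) (2 * m + 1) * qPoch q (a * b * q ^ 2) (2 * m + 2)) /
          qPoch q (a * b * q ^ 2) m := by
      have h := Finset.prod_range_succ' (fun j => qPoch q (a * b * q ^ 2) (m + j)) (m + 2)
      rw [Finset.prod_range_succ, Finset.prod_range_succ] at h
      rw [eq_div_iff (hP m), show 2 * m + 1 = m + (m + 1) by ring,
        show 2 * m + 2 = m + (m + 2) by ring, ← mul_assoc, h]
      congr 1
      exact Finset.prod_congr rfl fun j _ => by congr 1; ring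
    rw [ea, eq', zpow_add₀ ha, zpow_add₀ hq, zpow_natCast, zpow_natCast, eD,
      Finset.prod_range_succ (fun j => qPoch q q j * _ * _), if_neg (Nat.succ_ne_zero m),
      pow_succ (-1 : ℂ) (m + 1), qPoch_succ (q ^ 2),
      Finset.prod_range_succ (fun i => q ^ i * _), rho_succ, mul_mul_mul_comm (∏ i ∈ _, _), ← ih,
      mixedMoment_self]
    have k1 := hab 1
    have k2 := hbk (m + 1)
    have n1 := hP (2 * m + 1)
    have n2 := hP (2 * m + 2)
    have n0 := hP m
    have e1 : qPoch q (a * b * q) (m + 1) = (1 - a * b * q ^ 1) * qPoch q (a * b * q ^ 2) m := by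
      rw [qPoch_succ']; congr 2 <;> ring
    have e2 : qPoch q (a * b * q) (2 * (m + 1)) =
        (1 - a * b * q ^ 1) * qPoch q (a * b * q ^ 2) (2 * m + 1) := by
      rw [mul_add_one, show 2 * m + 2 = 2 * m + 1 + 1 by rfl, qPoch_succ']; congr 2 <;> ring
    have e3 : qPoch q (b * q) (m + 1) = qPoch q (b * q) m * (1 - b * q ^ (m + 1)) := by
      rw [qPoch_succ]; ring
    rw [e1, e2, e3, qPoch_succ q (a * q) (m + 1), Nat.add_sub_cancel,
      show (q ^ 2) ^ (m + 1) = (q ^ (m + 1)) ^ 2 by ring, mul_add_one 2 m]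
    have hpow : q ^ (m * (m + 2)) * q ^ (m + 1) * q = q ^ (m + 1) * (q ^ (m + 1) * q ^ ((m + 1) * m)) := by
      ring
    generalize ∏ j ∈ Finset.range (m + 1), qPoch q (a * b * q ^ 2) (m + j) = X1 at *
    generalize qPoch q (a * b * q ^ 2) (2 * m + 1) = X2 at *
    generalize qPoch q (a * b * q ^ 2) (2 * m + 2) = X3 at *
    generalize qPoch q (a * b * q ^ 2) m = X4 at *
    generalize 1 - a * b * q ^ 1 = X5 at *
    generalize 1 - b * q ^ (m + 1) = X6 at *
    generalize 1 - a * b * c * q * (q ^ (m + 1)) ^ 2 = X7 at *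
    generalize 1 - a * q * q ^ (m + 1) = X8 at *
    clear ih ea eq' eD
    have hqm : q ^ (m + 1) ≠ 0 := pow_ne_zero _ hq
    have hpow' : q ^ (m * (m + 2)) = q ^ (m + 1) * q ^ ((m + 1) * m) / q := by
      rw [eq_div_iff hq]; ring
    rw [hpow', mul_pow]
    generalize q ^ ((m + 1) * m) = Y2 at *
    generalize q ^ (m + 1) = Y3 at *
    rw [pow_succ a]
    generalize a ^ m = Y4 at *
    generalize a ^ (_ : ℤ) = Z1 at *
    generalize q ^ (_ : ℤ) = Z2 at *
    generalize qPoch q (b * q) m = Z3 at *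
    generalize qPoch q q (m + 1) = Z4 at *
    generalize qPoch q (a * q) (m + 1) = Z5 at *
    generalize qPoch (q ^ 2) (a * b * c * q) (m + 1) = Z6 at *
    generalize (∏ j ∈ Finset.range (m + 1), _ : ℂ) = Z7 at *
    generalize (-1 : ℂ) ^ (m + 1) = Z8 at *
    clear hP hpow hpow' hab hbk e1 e2 e3
    have key : X5 * X4 * X6 * (a * Y3 * Y3) / (X3 * (X5 * X2)) * (1 / (a * q * Y3 * X6)) =
        Y3 / q * (X4 / (X2 * X3)) := by
      field_simp
    rw [div_div_eq_mul_div _ _ X4]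
    linear_combination (Z8 * Z1 * Y4 * Z2 * Y2 * Z6 * X7 * Z7 * Z4 * Z5 * X8 * Z3 / X1) * key

theorem det_generic {q a b c : ℂ} (hq : q ≠ 0) (ha : a ≠ 0) (hb : b ≠ 0)
    (hab : ∀ k : ℕ, 1 - a * b * q ^ k ≠ 0) (hbk : ∀ k : ℕ, 1 - b * q ^ k ≠ 0)
    (m : ℕ) (hden : ∀ k ≤ m + 1, qPoch q q k ≠ 0 ∧ qPoch q (a * q) k ≠ 0 ∧
      qPoch (q ^ 2) (a * b * c * q) k ≠ 0) :
    (qMatrix q a b c (m + 1)).det =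
      detPrefactor q a b c m * awVal q a b c (m + 1) (m + 1) := by
  rw [prefactor_eq c hq ha hab hbk, det_qMatrix_eq_prod hq ha hb hab hbk m hden, mul_assoc]

/-! ### Removing the genericity assumption -/

theorem continuous_qPoch {f : ℂ → ℂ} (hf : Continuous f) (q : ℂ) (n : ℕ) :
    Continuous fun x => qPoch q (f x) n := by
  unfold qPoch
  fun_prop

/-- The values of `b` excluded by the generic argument are countably many. -/
theorem dense_generic {q a : ℂ} (hq : q ≠ 0) (ha : a ≠ 0) :
    Dense {b : ℂ | b ≠ 0 ∧ (∀ k : ℕ, 1 - a * b * q ^ k ≠ 0) ∧ (∀ k : ℕ, 1 - b * q ^ k ≠ 0)} := by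
  have hc : ({0} ∪ Set.range (fun k : ℕ => 1 / (a * q ^ k)) ∪
      Set.range (fun k : ℕ => 1 / q ^ k) : Set ℂ).Countable :=
    ((Set.countable_singleton _).union (Set.countable_range _)).union (Set.countable_range _)
  refine (hc.dense_compl ℂ).mono fun b hb => ?_
  simp only [Set.mem_compl_iff, Set.mem_union, Set.mem_singleton_iff, Set.mem_range, not_or,
    not_exists] at hb
  refine ⟨hb.1.1, fun k h => hb.1.2 k ?_, fun k h => hb.2 k ?_⟩
  · have := pow_ne_zero k hq
    rw [div_eq_iff (mul_ne_zero ha this)]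
    linear_combination h
  · rw [div_eq_iff (pow_ne_zero k hq)]
    linear_combination h

/-- The generic formula extends to all `b` for which the expressions in it are defined, since both
sides are continuous in `b` there. -/
theorem det_moment {q a b c : ℂ} (hq : q ≠ 0) (ha : a ≠ 0) (hb1 : b ≠ 1)
    (m : ℕ) (habq : ∀ k ≤ 2 * m, qPoch q (a * b * q ^ 2) k ≠ 0)
    (hden : ∀ k ≤ m + 1, qPoch q q k ≠ 0 ∧ qPoch q (a * q) k ≠ 0 ∧
      qPoch (q ^ 2) (a * b * c * q) k ≠ 0) :
    (qMatrix q a b c (m + 1)).det =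
      detPrefactor q a b c m * awVal q a b c (m + 1) (m + 1) := by
  set G : Set ℂ :=
    {b : ℂ | b ≠ 0 ∧ (∀ k : ℕ, 1 - a * b * q ^ k ≠ 0) ∧ (∀ k : ℕ, 1 - b * q ^ k ≠ 0)} with hG
  have hne : (nhdsWithin b G).NeBot :=
    mem_closure_iff_nhdsWithin_neBot.1 ((dense_generic hq ha) b)
  have c2 : ∀ k, ContinuousAt (fun b => qPoch (q ^ 2) (a * b * c * q) k) b := fun k =>
    (continuous_qPoch (by fun_prop) _ k).continuousAt
  have c3 : ∀ k, ContinuousAt (fun b => qPoch q (a * b * q ^ 2) k) b := fun k =>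
    (continuous_qPoch (by fun_prop) _ k).continuousAt
  refine tendsto_nhds_unique_of_eventuallyEq (l := nhdsWithin b G)
    (f := fun b => (qMatrix q a b c (m + 1)).det)
    (g := fun b => detPrefactor q a b c m * awVal q a b c (m + 1) (m + 1)) ?_ ?_ ?_
  · refine Filter.Tendsto.mono_left (ContinuousAt.tendsto ?_) nhdsWithin_le_nhds
    simp only [Matrix.det_apply, qMatrix, Matrix.of_apply, moment]
    refine tendsto_finsetSum _ fun σ _ => Filter.Tendsto.const_smul
      (tendsto_finsetProd _ fun i _ => Filter.Tendsto.const_mul _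
      (tendsto_const_nhds.div (c3 _) (habq _ ?_))) _
    have := (σ i).2
    have := i.2
    omega
  · refine Filter.Tendsto.mono_left (ContinuousAt.tendsto ?_) nhdsWithin_le_nhds
    unfold detPrefactor
    refine ((continuousAt_const.mul (c2 _)).mul (ContinuousAt.div ?_ ?_ ?_)).mul ?_
    · refine tendsto_finsetProd _ fun j _ => continuousAt_const.mul ?_
      by_cases hj : j = 0
      · simp only [hj, if_true]
        exact continuousAt_const.div (by fun_prop) (sub_ne_zero.2 hb1.symm)
      · simp only [hj, if_false]
        exact (continuous_qPoch (by fun_prop) _ _).continuousAt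
    · exact tendsto_finsetProd _ fun j _ => c3 _
    · exact Finset.prod_ne_zero_iff.2 fun j hj => habq _ (by have := Finset.mem_range.1 hj; omega)
    · simp only [awVal, awSum, awWeight]
      refine tendsto_finsetSum _ fun k hk => ?_
      obtain ⟨d1, d2, d3⟩ := hden k (by have := Finset.mem_range.1 hk; omega)
      exact (continuousAt_const.mul (continuous_qPoch (by fun_prop) _ _).continuousAt).mul
        ((continuousAt_const.div (continuousAt_const.mul (c2 _))
          (mul_ne_zero (mul_ne_zero d1 d2) d3)).mul continuousAt_const)
  · have hev : ∀ᶠ b in nhdsWithin b G, ∀ k ∈ Finset.range (m + 2),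
        qPoch (q ^ 2) (a * b * c * q) k ≠ 0 :=
      (Filter.eventually_all_finset _).2 fun k hk => nhdsWithin_le_nhds
        ((c2 k).eventually_ne (hden k (by have := Finset.mem_range.1 hk; omega)).2.2)
    filter_upwards [self_mem_nhdsWithin, hev] with x hx hx'
    exact det_generic hq ha hx.1 hx.2.1 hx.2.2 m fun k hk =>
      ⟨(hden k hk).1, (hden k hk).2.1, hx' k (Finset.mem_range.2 (by omega))⟩

/-- Extension of Nishizawa's q-analogue of the Mehta-Wang determinant formula
(Corollary 3.2).  Here the `(i,j)`-entry (for `1 ≤ i,j ≤ n`) is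
`(q^{i-1} - c q^{j-1}) (aq;q)_{i+j-2} / (abq²;q)_{i+j-2}`, the factor `(bq;q)_{-1}`
(occurring for `k = 1`) is interpreted as `1/(1-b)`, and the terminating `₄φ₃`-sum
is written using `(u,-u;q)_k = (u²;q²)_k`. -/
theorem det_mehta_wang_extension
    (q a b c : ℂ) (hq : q ≠ 0) (ha : a ≠ 0) (hb : b ≠ 0) (hc : c ≠ 0)
    (n : ℕ) (hn : 1 ≤ n) (hb1 : b ≠ 1)
    (habq : ∀ k ≤ 2 * n - 2, qPoch q (a * b * q ^ 2) k ≠ 0)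
    (hden : ∀ k ≤ n, qPoch q q k ≠ 0 ∧ qPoch q (a * q) k ≠ 0 ∧
      qPoch (q ^ 2) (a * b * c * q) k ≠ 0) :
    Matrix.det (Matrix.of fun i j : Fin n =>
        (q ^ (i : ℕ) - c * q ^ (j : ℕ)) *
          qPoch q (a * q) ((i : ℕ) + (j : ℕ)) / qPoch q (a * b * q ^ 2) ((i : ℕ) + (j : ℕ)))
      = (-1) ^ n * a ^ (((n : ℤ) * ((n : ℤ) - 3)) / 2) *
          q ^ (((n : ℤ) * ((n : ℤ) + 1) * (2 * (n : ℤ) - 5)) / 6) *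
          qPoch (q ^ 2) (a * b * c * q) n *
          (∏ k ∈ Finset.Icc 1 n,
            qPoch q q (k - 1) * qPoch q (a * q) k *
              (if k = 1 then 1 / (1 - b) else qPoch q (b * q) (k - 2)) /
              qPoch q (a * b * q ^ 2) (k + n - 2)) *
          ∑ k ∈ Finset.range (n + 1),
            qPoch q (q ^ (-(n : ℤ))) k * qPoch q (a * b * q ^ n) k *
              qPoch (q ^ 2) (a * c * q) k * q ^ k /
              (qPoch q q k * qPoch q (a * q) k * qPoch (q ^ 2) (a * b * c * q) k) := by
  obtain ⟨m, rfl⟩ : ∃ m, n = m + 1 := ⟨n - 1, by omega⟩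
  have h := det_moment (c := c) hq ha hb1 m (fun k hk => habq k (by omega)) hden
  have e1 : (Matrix.of fun i j : Fin (m + 1) => (q ^ (i : ℕ) - c * q ^ (j : ℕ)) *
      qPoch q (a * q) ((i : ℕ) + (j : ℕ)) / qPoch q (a * b * q ^ 2) ((i : ℕ) + (j : ℕ))) =
      qMatrix q a b c (m + 1) := by
    ext i j
    rw [qMatrix, Matrix.of_apply, Matrix.of_apply, moment, mul_div_assoc]
  rw [e1, h]
  congr 1
  · rw [detPrefactor]
    congr 1
    rw [← Finset.prod_div_distrib]
    refine Finset.prod_nbij (· + 1) (fun j hj => ?_) (fun i _ j _ h => Nat.succ_injective h)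
      (fun j hj => ⟨j - 1, ?_⟩) (fun j _ => ?_)
    · simp only [Finset.mem_range, Finset.mem_Icc] at hj ⊢
      omega
    · simp only [Finset.coe_range, Finset.coe_Icc, Set.mem_Iio, Set.mem_Icc] at hj ⊢
      omega
    · rw [show j + 1 + (m + 1) - 2 = m + j by omega]
      simp
  · rw [awVal, awSum]
    refine Finset.sum_congr rfl fun k _ => ?_
    rw [awWeight, zpow_neg, zpow_natCast, one_div]
    ring
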